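/- arXiv:2506.22667 — 2 statements merged into one kernel-verified Lean document; each statement's English description precedes it below -/
import Mathlib

section
/- There is an absolute constant C such that for all X ≥ 3 one has ∑_{1 < m ≤ X} μ²(2m)/τ(m) · L(1, (·/m)) ≤ C · X/√(log X), where for an odd squarefree integer m > 1, L(1, (·/m)) := ∑_{n=1}^∞ (n/m)/n (this series converges, since (·/m) is a nontrivial real Dirichlet character). -/
/-!
The sum is treated by an upper-bound sieve of dimension `1/2`, whose role is to replace `1 / τ(m)`
by a majorant that is a short divisor sum.

Let `ρ_d` be Selberg-type weights supported on squarefree `d ≤ D` with `ρ_1 = 1`, and put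
`Q(m) = ∑_{c ∣ m} (∑_{d ≤ D, c ∣ d ∣ m} ρ_d)²`. Pairing the inner sums with `μ(c)` gives `ρ_1 = 1`,
so Cauchy–Schwarz over the `τ(m)` divisors yields `Q(m) ≥ 1 / τ(m)`
(`inv_card_divisors_le_selbergQ`). With the optimal weights, `∑_{m ≤ Y} Q(m) ≤ Y / V + D⁵`
(`sum_selbergQ_le`), where `V = ∑_{f ≤ D} μ²(f) / ∏_{p ∣ f} (2 p - 1)` satisfies
`2 V² ≥ log (D + 1)` (`log_le_sq_selbergV`).

The majorant may be inserted because `L(1, (·/m)) ≥ 0`. In quantitative form, the Euler product for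
`s > 1` and the limit `s → 1` show that the truncation `∑_{n ≤ N} (n/m)/n` plus its tail bound is
nonnegative (`partialL_ge`); the tail is bounded through the Pólya–Vinogradov inequality
(`polya_vinogradov`). By positivity the sum extends to all odd `m ≤ X`, squarefree or not.

Exchanging the summations over `m` and `n ≤ N`, each square `n` contributes at most
`(1 / n) ∑_{m ≤ X} Q(m)`, and `∑ 1 / n` over squares is at most `2`. For nonsquare `n`, the
function `k ↦ (n/k)` on odd `k` is `4 n`-periodic with mean zero by reciprocity, so the sum of
`Q(m) (n/m)` over odd `m` is at most `4 n D⁵` (`sum_selbergQ_oddJacobi_le`). Taking `D ≈ X^(1/40)`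
and `N ≈ X^(3/4)` makes everything but the main term `X / V ≪ X / √(log X)` negligible.
-/

open Finset

/-! ### The Jacobi symbol as a primitive character -/

theorem exists_jacobiSym_eq_neg_one {m : ℕ} (hm : Odd m) (hsq : ¬ IsSquare m) :
    ∃ k : ℕ, jacobiSym (k : ℤ) m = -1 := by
  have hm0 : 0 < m := hm.pos
  obtain ⟨a, b, ha0, hb0, hab, hasq⟩ := Nat.sq_mul_squarefree_of_pos hm0
  have ha1 : a ≠ 1 := by
    rintro rfl
    exact hsq ⟨b, by rw [← hab]; ring⟩
  obtain ⟨p, hp, hpa⟩ := Nat.exists_prime_and_dvd ha1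
  have : Fact p.Prime := ⟨hp⟩
  have hpm : p ∣ m := hab ▸ hpa.mul_left _
  have hpodd : Odd p := hm.of_dvd_nat hpm
  have hp2 : p ≠ 2 := by rintro rfl; exact absurd hpodd (by decide)
  have hfac : m.factorization p = 2 * b.factorization p + 1 := by
    rw [← hab, Nat.factorization_mul (by positivity) ha0.ne', Nat.factorization_pow]
    simp only [Finsupp.coe_add, Finsupp.coe_smul, Pi.add_apply, Pi.smul_apply, smul_eq_mul]
    congr 1
    exact le_antisymm (hasq.natFactorization_le_one p)
      ((hp.dvd_iff_one_le_factorization ha0.ne').mp hpa)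
  have hcop : Nat.Coprime p (m / p ^ m.factorization p) := Nat.coprime_ordCompl hp hm0.ne'
  have hmc : p ^ m.factorization p * (m / p ^ m.factorization p) = m :=
    Nat.ordProj_mul_ordCompl_eq_self m p
  generalize m / p ^ m.factorization p = c at hcop hmc
  have hc0 : c ≠ 0 := by
    rintro rfl
    omega
  obtain ⟨r, hr⟩ := FiniteField.exists_nonsquare (F := ZMod p) (by rwa [ZMod.ringChar_zmod_n])
  have hr' : jacobiSym (r.val : ℤ) p = -1 := by
    rw [ZMod.nonsquare_iff_jacobiSym_eq_neg_one]
    simpa using hr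
  obtain ⟨k, hk1, hk2⟩ := Nat.chineseRemainder hcop r.val 1
  refine ⟨k, ?_⟩
  rw [← hmc, jacobiSym.mul_right' _ (pow_ne_zero _ hp.ne_zero) hc0, jacobiSym.pow_right, hfac,
    jacobiSym.mod_left' (a₁ := k) (a₂ := 1) (b := c) (by exact_mod_cast hk2),
    jacobiSym.mod_left' (a₁ := k) (a₂ := r.val) (b := p) (by exact_mod_cast hk1), hr']
  simp [pow_succ, pow_mul]

/-- The Jacobi symbol `(·/m)` as a complex Dirichlet character modulo `m`. -/
noncomputable def jacobiChar (m : ℕ) [NeZero m] : DirichletCharacter ℂ m where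
  toFun x := ((jacobiSym (x.val : ℤ) m : ℤ) : ℂ)
  map_one' := by
    have : jacobiSym (((1 : ZMod m).val : ℕ) : ℤ) m = jacobiSym 1 m := by
      apply jacobiSym.mod_left'
      rw [ZMod.val_one_eq_one_mod]; simp
    rw [this]; simp
  map_mul' x y := by
    have : jacobiSym (((x * y).val : ℕ) : ℤ) m = jacobiSym ((x.val : ℤ) * y.val) m := by
      apply jacobiSym.mod_left'
      rw [ZMod.val_mul]; simp
    rw [this, jacobiSym.mul_left]; push_cast; rfl
  map_nonunit' x hx := by
    have : jacobiSym (x.val : ℤ) m = 0 := by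
      rw [jacobiSym.eq_zero_iff_not_coprime]
      intro h
      apply hx
      rw [← ZMod.natCast_zmod_val x, ZMod.isUnit_iff_coprime]
      exact h
    rw [this, Int.cast_zero]

theorem jacobiChar_natCast (m : ℕ) [NeZero m] (k : ℕ) :
    jacobiChar m (k : ZMod m) = ((jacobiSym (k : ℤ) m : ℤ) : ℂ) := by
  have : jacobiSym (((k : ZMod m).val : ℕ) : ℤ) m = jacobiSym (k : ℤ) m := by
    apply jacobiSym.mod_left'
    rw [ZMod.val_natCast]; simp
  show ((jacobiSym (((k : ZMod m).val : ℕ) : ℤ) m : ℤ) : ℂ) = _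
  rw [this]

/-- If the conductor `d` were a proper divisor of `m`, then `m = d c` with `c > 1` coprime to `d`, and
an `n ≡ 1` mod `d` with `(n/c) = -1` would contradict that the character factors through `d`. -/
theorem jacobiChar_isPrimitive (m : ℕ) [NeZero m] (hm : Odd m) (hs : Squarefree m) :
    (jacobiChar m).IsPrimitive := by
  rw [DirichletCharacter.isPrimitive_def]
  set d := (jacobiChar m).conductor with hd
  have hdm : d ∣ m := DirichletCharacter.conductor_dvd_level _
  obtain ⟨c, hc⟩ := hdm
  by_contra hne
  have hm0 : m ≠ 0 := NeZero.ne m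
  have hc0 : c ≠ 0 := by rintro rfl; exact hm0 (by simpa using hc)
  have hd0 : d ≠ 0 := by rintro h; exact hm0 (by rw [hc, h]; simp)
  have hc1 : c ≠ 1 := by rintro rfl; exact hne (by simpa using hc.symm)
  have hcodd : Odd c := hm.of_dvd_nat ⟨d, by rw [hc]; ring⟩
  have hcop : Nat.Coprime d c := Nat.coprime_of_squarefree_mul (hc ▸ hs)
  have hcs : Squarefree c := hs.squarefree_of_dvd ⟨d, by rw [hc]; ring⟩
  have hnsq : ¬ IsSquare c := by
    rintro ⟨r, hr⟩
    have := hcs r ⟨1, by rw [hr]; ring⟩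
    rw [Nat.isUnit_iff] at this
    subst this; exact hc1 hr
  obtain ⟨k, hk⟩ := exists_jacobiSym_eq_neg_one hcodd hnsq
  obtain ⟨n, hn1, hn2⟩ := Nat.chineseRemainder hcop 1 k
  have hJ : jacobiSym (n : ℤ) m = -1 := by
    rw [hc, jacobiSym.mul_right' _ hd0 hc0,
      jacobiSym.mod_left' (a₁ := n) (a₂ := 1) (b := d) (by exact_mod_cast hn1),
      jacobiSym.mod_left' (a₁ := n) (a₂ := k) (b := c) (by exact_mod_cast hn2), hk]
    simp
  have hncop : Nat.Coprime n m := by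
    by_contra h
    have : jacobiSym (n : ℤ) m = 0 := by
      rw [jacobiSym.eq_zero_iff_not_coprime]; simpa using h
    omega
  have hft := DirichletCharacter.factorsThrough_conductor (jacobiChar m)
  rw [DirichletCharacter.factorsThrough_iff_ker_unitsMap hft.dvd] at hft
  have hmem : ZMod.unitOfCoprime n hncop ∈ (ZMod.unitsMap (DirichletCharacter.conductor_dvd_level (jacobiChar m))).ker := by
    rw [MonoidHom.mem_ker]
    ext
    rw [ZMod.unitsMap_val]
    simp only [ZMod.coe_unitOfCoprime, Units.val_one]
    rw [ZMod.cast_natCast (DirichletCharacter.conductor_dvd_level _)]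
    have := (ZMod.natCast_eq_natCast_iff n 1 d).mpr hn1
    simpa using this
  have := hft hmem
  rw [MonoidHom.mem_ker] at this
  have h2 := congrArg (fun u : ℂˣ => (u : ℂ)) this
  simp only [MulChar.coe_toUnitHom, ZMod.coe_unitOfCoprime, Units.val_one] at h2
  rw [jacobiChar_natCast, hJ] at h2
  norm_num at h2

/-! ### The Pólya–Vinogradov inequality -/

theorem jacobiChar_inv (m : ℕ) [NeZero m] : (jacobiChar m)⁻¹ = jacobiChar m := by
  rw [inv_eq_iff_mul_eq_one]
  ext u
  rw [MulChar.mul_apply, MulChar.one_apply_coe]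
  have hcop : (u : ZMod m).val.Coprime m := ZMod.val_coe_unit_coprime u
  have h1 : jacobiSym ((u : ZMod m).val : ℤ) m ^ 2 = 1 := by
    apply jacobiSym.sq_one
    exact hcop
  rw [← ZMod.natCast_zmod_val (u : ZMod m), jacobiChar_natCast, ← sq]
  exact_mod_cast h1

/-- The double discrete Fourier transform of the character, evaluated at `1`, is both the square of the
Gauss sum and `m` times the unimodular value at `-1`. -/
theorem norm_gaussSum_jacobiChar (m : ℕ) [NeZero m] (hm : Odd m) (hs : Squarefree m) :
    ‖gaussSum (jacobiChar m) ZMod.stdAddChar‖ = √m := by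
  set χ := jacobiChar m with hχ
  set G := gaussSum χ ZMod.stdAddChar with hG
  have hprim : χ.IsPrimitive := jacobiChar_isPrimitive m hm hs
  have hF := hprim.fourierTransform_eq_inv_mul_gaussSum
  have h := congrFun (ZMod.dft_dft (χ : ZMod m → ℂ)) 1
  rw [ZMod.dft_apply] at h
  have h2 : ∑ j : ZMod m, ZMod.stdAddChar (-(j * 1)) • ZMod.dft (χ : ZMod m → ℂ) j = G * G := by
    rw [← Equiv.sum_comp (Equiv.neg (ZMod m))]
    simp only [hF, Equiv.neg_apply, mul_one, neg_neg, smul_eq_mul]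
    rw [hχ, jacobiChar_inv, ← hχ]
    rw [← hG]
    change _ = gaussSum χ ZMod.stdAddChar * G
    rw [gaussSum, Finset.sum_mul]
    exact Finset.sum_congr rfl fun j _ => by ring
  rw [h2] at h
  have h3 : ‖χ (-1)‖ = 1 := by
    have : χ (-1) ^ 2 = 1 := by rw [← map_pow]; simp
    have h4 : ‖χ (-1)‖ ^ 2 = 1 := by rw [← norm_pow, this]; simp
    nlinarith [norm_nonneg (χ (-1)), sq_nonneg (‖χ (-1)‖ - 1)]
  have h5 : ‖G‖ * ‖G‖ = m := by
    rw [← norm_mul, h]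
    simp [h3]
  rw [← h5, Real.sqrt_mul_self (norm_nonneg _)]

/-- The bound `2 / ‖w - 1‖` for a geometric sum of a root of unity `w = e(v / m)`, combined with
`sin (π u / m) ≥ 2 u / m` for `u = v` or `u = m - v`, whichever is at most `m / 2`. -/
theorem norm_geom_sum_stdAddChar_le (m : ℕ) [NeZero m] (k : ZMod m) (hk : k ≠ 0) (x : ℕ) :
    ‖∑ j ∈ range x, (ZMod.stdAddChar k : ℂ) ^ j‖
      ≤ m / 2 * (1 / (k.val : ℝ) + 1 / ((m : ℝ) - k.val)) := by
  set w : ℂ := ZMod.stdAddChar k with hw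
  have hm0 : (0 : ℝ) < m := by exact_mod_cast Nat.pos_of_ne_zero (NeZero.ne m)
  have hv0 : (0 : ℝ) < k.val := by
    exact_mod_cast Nat.pos_of_ne_zero (by rwa [Ne, ZMod.val_eq_zero])
  have hvm : (k.val : ℝ) < m := by exact_mod_cast ZMod.val_lt k
  have hnorm : ‖w‖ = 1 := by rw [hw, ZMod.stdAddChar_apply]; exact Circle.norm_coe _
  have hexp : w = Complex.exp (Complex.I * ((2 * Real.pi * k.val / m : ℝ) : ℂ)) := by
    rw [hw, ZMod.stdAddChar_apply, ZMod.toCircle_apply]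
    congr 1; push_cast; ring
  set v : ℝ := (k.val : ℝ) with hvdef
  have hw1 : ‖w - 1‖ = 2 * |Real.sin (Real.pi * v / m)| := by
    rw [hexp, Complex.norm_exp_I_mul_ofReal_sub_one, norm_mul]
    simp only [Real.norm_eq_abs, Nat.abs_ofNat]
    congr 3; ring
  have hpi := Real.pi_pos
  have key : ∀ u : ℝ, 0 < u → u ≤ m / 2 → 2 * u / m ≤ Real.sin (Real.pi * u / m) := by
    intro u hu hu2
    have := Real.mul_le_sin (x := Real.pi * u / m) (by positivity)
      (by rw [div_le_div_iff₀ hm0 (by norm_num)]; nlinarith)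
    calc 2 * u / m = 2 / Real.pi * (Real.pi * u / m) := by field_simp
      _ ≤ _ := this
  have hgeom : ‖∑ j ∈ range x, w ^ j‖ * ‖w - 1‖ ≤ 2 := by
    rw [← norm_mul, geom_sum_mul]
    calc ‖w ^ x - 1‖ ≤ ‖w ^ x‖ + ‖(1 : ℂ)‖ := norm_sub_le _ _
      _ = 2 := by rw [norm_pow, hnorm]; norm_num
  set S := ‖∑ j ∈ range x, w ^ j‖ with hS
  have hS0 : 0 ≤ S := norm_nonneg _
  have hfin : ∀ u : ℝ, 0 < u → 2 * u / m ≤ |Real.sin (Real.pi * v / m)| →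
      S ≤ m / 2 * (1 / u) := by
    intro u hu h
    have h1 : S * (2 * (2 * u / m)) ≤ 2 := by
      refine le_trans ?_ hgeom
      rw [hw1]
      gcongr
    have h2 : S * (2 * (2 * u / m)) = (4 * u / m) * S := by ring
    rw [h2] at h1
    have h3 : (4 * u / m) * (m / 2 * (1 / u)) = 2 := by field_simp; norm_num
    have h4 : (4 * u / m) * S ≤ (4 * u / m) * (m / 2 * (1 / u)) := by rw [h3]; exact h1
    exact le_of_mul_le_mul_left h4 (by positivity)
  have hmv : 0 < (m : ℝ) - v := by linarith
  rcases le_total v (m / 2) with h | h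
  · refine (hfin v hv0 ((key v hv0 h).trans (le_abs_self _))).trans ?_
    gcongr
    have : 0 ≤ 1 / ((m : ℝ) - v) := by positivity
    linarith
  · have := key (m - v) hmv (by linarith)
    have e : Real.pi * (m - v) / m = Real.pi - Real.pi * v / m := by field_simp
    rw [e, Real.sin_pi_sub] at this
    refine (hfin (m - v) hmv (this.trans (le_abs_self _))).trans ?_
    gcongr
    have : 0 ≤ 1 / v := by positivity
    linarith

/-- The term `v = 0` contributes `1 / 0 = 0` to the first part, so both parts are harmonic sums. -/
theorem sum_inv_le (m : ℕ) :
    ∑ v ∈ range m, (1 / (v : ℝ) + 1 / ((m : ℝ) - v)) ≤ 2 * (1 + Real.log m) := by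
  have hH : ((harmonic m : ℚ) : ℝ) ≤ 1 + Real.log m := harmonic_le_one_add_log m
  have h0 : ((harmonic m : ℚ) : ℝ) = ∑ v ∈ range m, 1 / ((v : ℝ) + 1) := by
    simp [harmonic]
  rw [sum_add_distrib]
  have h1 : ∑ v ∈ range m, 1 / (v : ℝ) ≤ ∑ v ∈ range m, 1 / ((v : ℝ) + 1) := by
    rcases m with _ | m
    · simp
    · rw [sum_range_succ' (fun v : ℕ => 1 / (v : ℝ)), sum_range_succ]
      simp only [Nat.cast_add, Nat.cast_one, Nat.cast_zero, div_zero, add_zero]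
      have : (0 : ℝ) ≤ 1 / ((m : ℝ) + 1) := by positivity
      linarith
  have h2 : ∑ v ∈ range m, 1 / ((m : ℝ) - v) = ∑ v ∈ range m, 1 / ((v : ℝ) + 1) := by
    rw [← sum_range_reflect]
    refine sum_congr rfl fun v hv => ?_
    have hv' : v < m := mem_range.mp hv
    have : ((m - 1 - v : ℕ) : ℝ) = m - 1 - v := by
      rw [Nat.cast_sub (by omega), Nat.cast_sub (by omega)]; simp
    rw [this]; congr 1; ring
  linarith

/-- The character is expanded by Fourier inversion; its transform has size at most `√m` and vanishes
at `0`, and the remaining geometric sums add up to a harmonic sum. -/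
theorem polya_vinogradov_squarefree {m : ℕ} (hm1 : 1 < m) (hm : Odd m) (hs : Squarefree m) (x : ℕ) :
    |∑ n ∈ range x, (jacobiSym (n : ℤ) m : ℝ)| ≤ √m * (1 + Real.log m) := by
  have : NeZero m := ⟨by omega⟩
  have : Fact (1 < m) := ⟨hm1⟩
  have hm0 : (0 : ℝ) < m := by exact_mod_cast hm.pos
  set χ := jacobiChar m with hχ
  have hprim : χ.IsPrimitive := jacobiChar_isPrimitive m hm hs
  have hF := hprim.fourierTransform_eq_inv_mul_gaussSum
  have hFn : ∀ k, ‖ZMod.dft (χ : ZMod m → ℂ) k‖ ≤ √m := by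
    intro k
    rw [hF, norm_mul, norm_gaussSum_jacobiChar m hm hs]
    exact mul_le_of_le_one_left (Real.sqrt_nonneg _) (DirichletCharacter.norm_le_one _ _)
  have hF0 : ZMod.dft (χ : ZMod m → ℂ) 0 = 0 := by
    rw [hF, neg_zero, MulChar.map_zero, zero_mul]
  have hcast : |∑ n ∈ range x, (jacobiSym (n : ℤ) m : ℝ)| = ‖∑ n ∈ range x, χ (n : ZMod m)‖ := by
    rw [← Real.norm_eq_abs, ← Complex.norm_real]
    congr 1
    push_cast
    exact sum_congr rfl fun n _ => (jacobiChar_natCast m n).symm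
  have hinv : ∀ n : ℕ, (m : ℂ) * χ (n : ZMod m)
      = ∑ k : ZMod m, ZMod.dft (χ : ZMod m → ℂ) k * (ZMod.stdAddChar k : ℂ) ^ n := by
    intro n
    have h := congrFun (ZMod.dft_dft (χ : ZMod m → ℂ)) (-(n : ZMod m))
    rw [ZMod.dft_apply] at h
    simp only [neg_neg, smul_eq_mul] at h
    rw [← h]
    refine sum_congr rfl fun k _ => ?_
    rw [mul_comm, ← AddChar.map_nsmul_eq_pow]
    congr 2
    rw [nsmul_eq_mul]; ring
  have hsum : (m : ℂ) * ∑ n ∈ range x, χ (n : ZMod m)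
      = ∑ k : ZMod m, ZMod.dft (χ : ZMod m → ℂ) k * ∑ n ∈ range x, (ZMod.stdAddChar k : ℂ) ^ n := by
    rw [mul_sum]
    simp only [hinv, mul_sum]
    rw [sum_comm]
  have hbound : (m : ℝ) * ‖∑ n ∈ range x, χ (n : ZMod m)‖ ≤ m * (√m * (1 + Real.log m)) := by
    calc (m : ℝ) * ‖∑ n ∈ range x, χ (n : ZMod m)‖
        = ‖(m : ℂ) * ∑ n ∈ range x, χ (n : ZMod m)‖ := by rw [norm_mul]; simp
      _ ≤ ∑ k : ZMod m, √m * (m / 2 * (1 / (k.val : ℝ) + 1 / ((m : ℝ) - k.val))) := by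
        rw [hsum]
        refine (norm_sum_le _ _).trans (sum_le_sum fun k _ => ?_)
        have hvm : (k.val : ℝ) < m := by exact_mod_cast ZMod.val_lt k
        have : 0 < (m : ℝ) - k.val := by linarith
        by_cases hk : k = 0
        · rw [hk, hF0]
          simp only [zero_mul, norm_zero]
          rw [hk] at this
          positivity
        · rw [norm_mul]
          exact mul_le_mul (hFn k) (norm_geom_sum_stdAddChar_le m k hk x) (norm_nonneg _)
            (Real.sqrt_nonneg _)
      _ = √m * (m / 2 * ∑ v ∈ range m, (1 / (v : ℝ) + 1 / ((m : ℝ) - v))) := by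
        rw [← mul_sum, ← mul_sum]
        congr 2
        refine sum_nbij' (fun k : ZMod m => k.val) (fun v : ℕ => (v : ZMod m)) ?_ ?_ ?_ ?_ ?_
        · intro k _; exact mem_range.mpr (ZMod.val_lt k)
        · intro v _; exact mem_univ _
        · intro k _; simp
        · intro v hv; exact ZMod.val_cast_of_lt (mem_range.mp hv)
        · intro k _; rfl
      _ ≤ √m * (m / 2 * (2 * (1 + Real.log m))) := by
        gcongr
        exact sum_inv_le m
      _ = m * (√m * (1 + Real.log m)) := by ring
  rw [hcast]
  exact le_of_mul_le_mul_left hbound hm0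

theorem abs_jacobiSym_le_one (a : ℤ) (m : ℕ) : |(jacobiSym a m : ℝ)| ≤ 1 := by
  rcases jacobiSym.trichotomy a m with h | h | h <;> simp [h]

theorem sum_range_filter_dvd (p : ℕ) (hp : 0 < p) (x : ℕ) (g : ℕ → ℝ) :
    ∑ n ∈ (range x).filter (p ∣ ·), g n = ∑ k ∈ range ((x + p - 1) / p), g (p * k) := by
  symm
  refine sum_nbij (fun k => p * k) ?_ ?_ ?_ ?_
  · intro k hk
    simp only [mem_range, mem_filter] at hk ⊢
    refine ⟨?_, dvd_mul_right _ _⟩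
    have := (Nat.le_div_iff_mul_le hp).mp (Nat.succ_le_of_lt hk)
    rw [Nat.succ_mul, mul_comm] at this
    omega
  · intro a _ b _ h
    exact Nat.eq_of_mul_eq_mul_left hp h
  · rintro n hn
    simp only [coe_filter, mem_range, Set.mem_ofPred_eq] at hn
    obtain ⟨hn, k, rfl⟩ := hn
    refine ⟨k, ?_, rfl⟩
    simp only [coe_range, Set.mem_Iio]
    apply Nat.lt_of_succ_le
    rw [Nat.le_div_iff_mul_le hp, Nat.succ_mul, mul_comm]
    omega
  · intro _ _; rfl

/-- Induction on `m`, starting from squarefree moduli: if `m = p² r`, then `(n/m)` is `(n/r)` with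
the multiples of `p` removed, which costs a factor `2 ≤ p = √(m / r)`. -/
theorem polya_vinogradov {m : ℕ} (hm : Odd m) (hsq : ¬ IsSquare m) (x : ℕ) :
    |∑ n ∈ range x, (jacobiSym (n : ℤ) m : ℝ)| ≤ √m * (1 + Real.log m) := by
  induction m using Nat.strong_induction_on generalizing x with
  | _ m ih =>
  by_cases hs : Squarefree m
  · refine polya_vinogradov_squarefree ?_ hm hs x
    have hpos := hm.pos
    by_contra h
    have : m = 1 := by omega
    exact hsq ⟨1, this⟩
  · rw [Nat.squarefree_iff_prime_squarefree] at hs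
    push Not at hs
    obtain ⟨p, hp, m', hm'⟩ := hs
    have : Fact p.Prime := ⟨hp⟩
    have hmpos := hm.pos
    have hm'0 : m' ≠ 0 := by rintro rfl; omega
    have hodd' : Odd m' := hm.of_dvd_nat ⟨p * p, by rw [hm']; ring⟩
    have hsq' : ¬ IsSquare m' := by
      rintro ⟨r, hr⟩
      exact hsq ⟨p * r, by rw [hm', hr]; ring⟩
    have hp2 := hp.two_le
    have hlt : m' < m := by
      rw [hm']
      exact lt_mul_of_one_lt_left (Nat.pos_of_ne_zero hm'0) (by nlinarith)
    have hIH := ih m' hlt hodd' hsq'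
    set B : ℝ := √m' * (1 + Real.log m') with hB
    have hjac : ∀ n : ℕ, (jacobiSym (n : ℤ) m : ℝ)
        = jacobiSym (n : ℤ) m' - if p ∣ n then (jacobiSym (n : ℤ) m' : ℝ) else 0 := by
      intro n
      rw [hm', jacobiSym.mul_right' _ (mul_ne_zero hp.ne_zero hp.ne_zero) hm'0,
        jacobiSym.mul_right' _ hp.ne_zero hp.ne_zero, ← sq]
      split_ifs with h
      · have : jacobiSym (n : ℤ) p = 0 := by
          rw [jacobiSym.eq_zero_iff_not_coprime]
          intro h'
          have h' : Nat.Coprime n p := h'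
          exact (hp.coprime_iff_not_dvd.mp h'.symm) h
        simp [this]
      · rw [jacobiSym.sq_one (a := (n : ℤ)) (b := p)
          (show Nat.Coprime n p from (hp.coprime_iff_not_dvd.mpr h).symm)]
        simp
    have h1 : ∑ n ∈ range x, (jacobiSym (n : ℤ) m : ℝ) = ∑ n ∈ range x, (jacobiSym (n : ℤ) m' : ℝ)
        - jacobiSym (p : ℤ) m' * ∑ k ∈ range ((x + p - 1) / p), (jacobiSym (k : ℤ) m' : ℝ) := by
      simp only [hjac, sum_sub_distrib]
      congr 1
      rw [← sum_filter, sum_range_filter_dvd p hp.pos, mul_sum]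
      refine sum_congr rfl fun k _ => ?_
      push_cast
      rw [jacobiSym.mul_left]; push_cast; rfl
    have h2 : |∑ n ∈ range x, (jacobiSym (n : ℤ) m : ℝ)| ≤ B + 1 * B := by
      rw [h1]
      refine (abs_sub _ _).trans (add_le_add (hIH x) ?_)
      rw [abs_mul]
      exact mul_le_mul (abs_jacobiSym_le_one _ _) (hIH _) (abs_nonneg _) zero_le_one
    refine h2.trans ?_
    have hm'1 : (1 : ℝ) ≤ m' := by exact_mod_cast Nat.one_le_iff_ne_zero.mpr hm'0
    have hsqrt : √(m : ℝ) = p * √m' := by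
      rw [hm']; push_cast
      rw [Real.sqrt_mul (by positivity), Real.sqrt_mul_self (by positivity)]
    have hlog : Real.log m' ≤ Real.log m := by
      apply Real.log_le_log (by linarith)
      exact_mod_cast hlt.le
    have hlog0 : 0 ≤ Real.log m' := Real.log_nonneg hm'1
    have hp2' : (2 : ℝ) ≤ p := by exact_mod_cast hp2
    rw [hsqrt]
    calc B + 1 * B = 2 * √m' * (1 + Real.log m') := by rw [hB]; ring
      _ ≤ p * √m' * (1 + Real.log m) := by gcongr

/-! ### Truncation and positivity of `L(1, (·/m))` -/

/-- Summation by parts for a sequence with bounded partial sums against nonnegative decreasing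
weights. -/
theorem abs_sum_mul_antitone_le {a f : ℕ → ℝ} {B : ℝ} (hA : ∀ x, |∑ n ∈ range x, a n| ≤ B)
    {M : ℕ} (hf : ∀ n, M ≤ n → f (n + 1) ≤ f n) (hf0 : ∀ n, M ≤ n → 0 ≤ f n) {K : ℕ} (hK : M ≤ K) :
    |∑ n ∈ Ico M K, a n * f n| ≤ 2 * B * f M := by
  have hB : 0 ≤ B := (abs_nonneg _).trans (hA 0)
  have key : |∑ n ∈ Ico M K, a n * f n - (∑ n ∈ range K, a n) * f K
      + (∑ n ∈ range M, a n) * f M| ≤ B * (f M - f K) := by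
    induction K, hK using Nat.le_induction with
    | base => simp
    | succ K hK ih =>
      rw [sum_Ico_succ_top hK]
      have e : ∑ n ∈ Ico M K, a n * f n + a K * f K - (∑ n ∈ range (K + 1), a n) * f (K + 1)
          + (∑ n ∈ range M, a n) * f M
          = (∑ n ∈ Ico M K, a n * f n - (∑ n ∈ range K, a n) * f K
            + (∑ n ∈ range M, a n) * f M)
            + (∑ n ∈ range (K + 1), a n) * (f K - f (K + 1)) := by
        rw [sum_range_succ]; ring
      rw [e]
      refine (abs_add_le _ _).trans ?_
      have h1 : |(∑ n ∈ range (K + 1), a n) * (f K - f (K + 1))| ≤ B * (f K - f (K + 1)) := by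
        rw [abs_mul, abs_of_nonneg (sub_nonneg.mpr (hf K hK))]
        exact mul_le_mul_of_nonneg_right (hA _) (sub_nonneg.mpr (hf K hK))
      linarith
  have h1 : |(∑ n ∈ range K, a n) * f K| ≤ B * f K := by
    rw [abs_mul, abs_of_nonneg (hf0 K hK)]
    exact mul_le_mul_of_nonneg_right (hA _) (hf0 K hK)
  have h2 : |(∑ n ∈ range M, a n) * f M| ≤ B * f M := by
    rw [abs_mul, abs_of_nonneg (hf0 M le_rfl)]
    exact mul_le_mul_of_nonneg_right (hA _) (hf0 M le_rfl)
  rw [abs_le] at *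
  constructor <;> nlinarith

/-- The partial sum `∑_{n ≤ N} (n/m)/n` of the series defining `L(1, (·/m))`. -/
noncomputable def partialL (N m : ℕ) : ℝ := ∑ n ∈ Icc 1 N, (jacobiSym (n : ℤ) m : ℝ) / n

theorem partialL_eq_sum_range (N m : ℕ) :
    partialL N m = ∑ n ∈ range (N + 1), (jacobiSym (n : ℤ) m : ℝ) / n := by
  rw [partialL, sum_range_succ', ← Ico_add_one_right_eq_Icc, sum_Ico_eq_sum_range]
  simp [add_comm]

theorem partialL_le_add {m : ℕ} {B : ℝ} (hA : ∀ x, |∑ n ∈ range x, (jacobiSym (n : ℤ) m : ℝ)| ≤ B)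
    {N K : ℕ} (hNK : N ≤ K) : partialL K m ≤ partialL N m + 2 * B / (N + 1) := by
  rw [partialL_eq_sum_range, partialL_eq_sum_range,
    ← sum_range_add_sum_Ico _ (Nat.succ_le_succ hNK)]
  have := abs_sum_mul_antitone_le hA (f := fun n => 1 / (n : ℝ)) (M := N + 1) (K := K + 1)
    (fun n hn => by
      have : (0 : ℝ) < n := by exact_mod_cast (by omega : 0 < n)
      push_cast
      gcongr
      linarith) (fun n _ => by positivity) (by omega)
  have h := (abs_le.mp this).2
  push_cast at h
  simp only [mul_one_div] at h
  linarith

theorem le_partialL_add_of_tendsto {m : ℕ} {B L : ℝ}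
    (hA : ∀ x, |∑ n ∈ range x, (jacobiSym (n : ℤ) m : ℝ)| ≤ B)
    (hL : Filter.Tendsto (fun N : ℕ => ∑ n ∈ Finset.Icc 1 N, (jacobiSym (n : ℤ) m : ℝ) / n)
          Filter.atTop (nhds L)) (N : ℕ) : L ≤ partialL N m + 2 * B / (N + 1) := by
  refine le_of_tendsto hL ?_
  filter_upwards [Filter.eventually_ge_atTop N] with K hK
  exact partialL_le_add hA hK

/-- For `s > 1` the value is an Euler product with positive factors. -/
theorem tsum_jacobiSym_rpow_nonneg {m : ℕ} (s : ℝ) (hs : 1 < s) :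
    (Summable fun n : ℕ => (jacobiSym (n : ℤ) m : ℝ) * (n : ℝ) ^ (-s)) ∧
    0 ≤ ∑' n : ℕ, (jacobiSym (n : ℤ) m : ℝ) * (n : ℝ) ^ (-s) := by
  let f : ℕ →*₀ ℝ :=
    { toFun := fun n => (jacobiSym (n : ℤ) m : ℝ) * (n : ℝ) ^ (-s)
      map_zero' := by
        rw [Nat.cast_zero (R := ℝ), Real.zero_rpow (by linarith)]; simp
      map_one' := by simp
      map_mul' := fun x y => by
        push_cast
        rw [jacobiSym.mul_left, Real.mul_rpow (by positivity) (by positivity)]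
        push_cast; ring }
  have hle : ∀ n : ℕ, ‖f n‖ ≤ (n : ℝ) ^ (-s) := by
    intro n
    change ‖(jacobiSym (n : ℤ) m : ℝ) * (n : ℝ) ^ (-s)‖ ≤ _
    have h0 : (0 : ℝ) ≤ (n : ℝ) ^ (-s) := by positivity
    rw [norm_mul, Real.norm_eq_abs, Real.norm_of_nonneg h0]
    exact mul_le_of_le_one_left h0 (abs_jacobiSym_le_one _ _)
  have hsum : Summable (‖f ·‖) :=
    Summable.of_nonneg_of_le (fun _ => norm_nonneg _) hle
      (Real.summable_nat_rpow.mpr (by linarith))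
  refine ⟨hsum.of_norm, ?_⟩
  refine ge_of_tendsto (EulerProduct.eulerProduct_completely_multiplicative hsum)
    (Filter.Eventually.of_forall fun n => prod_nonneg fun p hp => ?_)
  rw [inv_nonneg, sub_nonneg]
  refine (le_abs_self _).trans ((hle p).trans ?_)
  have hp1 : (1 : ℝ) ≤ p := by exact_mod_cast (Nat.prime_of_mem_primesBelow hp).one_lt.le
  exact Real.rpow_le_one_of_one_le_of_nonpos hp1 (by linarith)

/-- A quantitative form of `L(1, (·/m)) ≥ 0`: the analogous inequality for `s > 1` passes to the limit
`s → 1`, because only the first `N` terms and the tail bound remain. -/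
theorem partialL_ge {m : ℕ} (hm1 : 1 < m) {B : ℝ}
    (hA : ∀ x, |∑ n ∈ range x, (jacobiSym (n : ℤ) m : ℝ)| ≤ B) (N : ℕ) :
    0 ≤ partialL N m + 2 * B / (N + 1) := by
  have key : ∀ s : ℝ, 1 < s → 0 ≤ ∑ n ∈ range (N + 1), (jacobiSym (n : ℤ) m : ℝ) * (n : ℝ) ^ (-s)
      + 2 * B * ((N + 1 : ℕ) : ℝ) ^ (-s) := by
    intro s hs
    obtain ⟨hsum, h0⟩ := tsum_jacobiSym_rpow_nonneg (m := m) s hs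
    refine h0.trans (le_of_tendsto hsum.hasSum.tendsto_sum_nat ?_)
    filter_upwards [Filter.eventually_ge_atTop (N + 1)] with K hK
    rw [← sum_range_add_sum_Ico _ hK]
    have := abs_sum_mul_antitone_le hA (f := fun n => (n : ℝ) ^ (-s)) (M := N + 1) (K := K)
      (fun n hn => by
        have h0 : (0 : ℝ) < n := by exact_mod_cast (by omega : 0 < n)
        push_cast
        exact Real.rpow_le_rpow_of_nonpos h0 (by linarith) (by linarith))
      (fun n _ => by positivity) hK
    have h := (abs_le.mp this).2
    linarith
  have hlim : Filter.Tendsto (fun s : ℝ =>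
      ∑ n ∈ range (N + 1), (jacobiSym (n : ℤ) m : ℝ) * (n : ℝ) ^ (-s)
      + 2 * B * ((N + 1 : ℕ) : ℝ) ^ (-s)) (nhdsWithin 1 (Set.Ioi 1))
      (nhds (partialL N m + 2 * B / (N + 1))) := by
    have hpow : ∀ n : ℕ, n ≠ 0 → Filter.Tendsto (fun s : ℝ => (n : ℝ) ^ (-s))
        (nhdsWithin 1 (Set.Ioi 1)) (nhds ((n : ℝ)⁻¹)) := by
      intro n hn
      have hn' : (n : ℝ) ≠ 0 := by exact_mod_cast hn
      have hc : Continuous fun s : ℝ => (n : ℝ) ^ (-s) := by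
        exact Continuous.rpow continuous_const continuous_neg (fun _ => Or.inl hn')
      have := hc.tendsto 1
      rw [Real.rpow_neg_one] at this
      exact this.mono_left nhdsWithin_le_nhds
    rw [partialL_eq_sum_range]
    refine Filter.Tendsto.add ?_ ?_
    · refine tendsto_finsetSum _ fun n _ => ?_
      rcases Nat.eq_zero_or_pos n with rfl | hn
      · simp [jacobiSym.zero_left hm1]
      · rw [div_eq_mul_inv]
        exact (hpow n hn.ne').const_mul _
    · have := (hpow (N + 1) (by omega)).const_mul (2 * B)
      rw [div_eq_mul_inv]
      push_cast at this ⊢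
      exact this
  refine ge_of_tendsto hlim ?_
  filter_upwards [self_mem_nhdsWithin] with s hs
  exact key s hs

theorem partialL_nonneg_of_isSquare {m : ℕ} (hm0 : m ≠ 0) (h : IsSquare m) (N : ℕ) :
    0 ≤ partialL N m := by
  obtain ⟨r, rfl⟩ := h
  have hr : r ≠ 0 := by rintro rfl; simp at hm0
  refine sum_nonneg fun n _ => div_nonneg ?_ (by positivity)
  rw [jacobiSym.mul_right' _ hr hr]
  push_cast
  exact mul_self_nonneg _

/-! ### Cancellation in the lower argument -/

/-- The function `k ↦ (n/k)` on odd `k`, extended by zero to even `k`. -/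
noncomputable def oddJacobi (n k : ℕ) : ℝ := if Odd k then (jacobiSym (n : ℤ) k : ℝ) else 0

/-- Write `n = 2^j r` with `r` odd. If `r` is a square then `j` is odd and some `k ≡ 5` mod `8`
works; otherwise some `k ≡ 1` mod `8` works, by quadratic reciprocity. -/
theorem exists_odd_jacobiSym_eq_neg_one {n : ℕ} (hsq : ¬ IsSquare n) :
    ∃ k : ℕ, Odd k ∧ jacobiSym (n : ℤ) k = -1 := by
  have hn0 : n ≠ 0 := by rintro rfl; exact hsq ⟨0, rfl⟩
  obtain ⟨j, n', hodd, rfl⟩ := Nat.exists_eq_two_pow_mul_odd hn0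
  have hcop : Nat.Coprime 8 n' := by
    have : Nat.Coprime (2 ^ 3) n' := Nat.Coprime.pow_left 3 (Nat.coprime_two_left.mpr hodd)
    exact this
  have hodd8 : ∀ k : ℕ, k % 8 = 1 ∨ k % 8 = 5 → Odd k ∧ k % 4 = 1 := by
    intro k hk
    exact ⟨Nat.odd_iff.mpr (by omega), by omega⟩
  have hjac : ∀ k : ℕ, k % 8 = 1 ∨ k % 8 = 5 →
      jacobiSym ((2 ^ j * n' : ℕ) : ℤ) k = ZMod.χ₈ k ^ j * jacobiSym (k : ℤ) n' := by
    intro k hk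
    obtain ⟨h1, h2⟩ := hodd8 k hk
    push_cast
    rw [jacobiSym.mul_left, jacobiSym.pow_left, jacobiSym.at_two h1,
      jacobiSym.quadratic_reciprocity_one_mod_four' hodd h2]
  by_cases hn' : IsSquare n'
  · obtain ⟨r, hr⟩ := hn'
    have hj : Odd j := by
      rw [← Nat.not_even_iff_odd]
      rintro ⟨i, hi⟩
      exact hsq ⟨2 ^ i * r, by rw [hi, hr]; ring⟩
    obtain ⟨k, hk1, hk2⟩ := Nat.chineseRemainder hcop 5 1
    have hk8 : k % 8 = 5 := hk1
    refine ⟨k, (hodd8 k (Or.inr hk8)).1, ?_⟩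
    rw [hjac k (Or.inr hk8),
      jacobiSym.mod_left' (a₁ := k) (a₂ := 1) (b := n') (by exact_mod_cast hk2),
      jacobiSym.one_left, mul_one]
    have : ZMod.χ₈ (k : ZMod 8) = -1 := by
      rw [(ZMod.natCast_eq_natCast_iff k 5 8).mpr hk1]; rfl
    rw [this, hj.neg_one_pow]
  · obtain ⟨k', hk'⟩ := exists_jacobiSym_eq_neg_one hodd hn'
    obtain ⟨k, hk1, hk2⟩ := Nat.chineseRemainder hcop 1 k'
    have hk8 : k % 8 = 1 := hk1
    refine ⟨k, (hodd8 k (Or.inl hk8)).1, ?_⟩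
    rw [hjac k (Or.inl hk8),
      jacobiSym.mod_left' (a₁ := k) (a₂ := k') (b := n') (by exact_mod_cast hk2), hk']
    have : ZMod.χ₈ (k : ZMod 8) = 1 := by
      rw [(ZMod.natCast_eq_natCast_iff k 1 8).mpr hk1]; rfl
    rw [this, one_pow, one_mul]

theorem abs_sum_range_le_of_periodic {g : ℕ → ℝ} {M : ℕ} (hM : 0 < M) (hper : ∀ k, g (k + M) = g k)
    (hg : ∀ k, |g k| ≤ 1) (h0 : ∑ k ∈ range M, g k = 0) (K : ℕ) :
    |∑ k ∈ range K, g k| ≤ M := by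
  induction K using Nat.strong_induction_on with
  | _ K ih =>
  rcases le_or_gt M K with h | h
  · obtain ⟨r, rfl⟩ := Nat.exists_eq_add_of_le h
    rw [sum_range_add, h0, zero_add]
    have : ∑ k ∈ range r, g (M + k) = ∑ k ∈ range r, g k :=
      sum_congr rfl fun k _ => by rw [add_comm, hper]
    rw [this]
    exact ih r (by omega)
  · refine (abs_sum_le_sum_abs _ _).trans ?_
    calc ∑ k ∈ range K, |g k| ≤ ∑ k ∈ range K, (1 : ℝ) := sum_le_sum fun k _ => hg k
      _ = K := by simp
      _ ≤ M := by exact_mod_cast h.le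

theorem abs_oddJacobi_le_one (n k : ℕ) : |oddJacobi n k| ≤ 1 := by
  unfold oddJacobi
  split_ifs
  · exact abs_jacobiSym_le_one _ _
  · simp

theorem oddJacobi_mul (n a b : ℕ) : oddJacobi n (a * b) = oddJacobi n a * oddJacobi n b := by
  unfold oddJacobi
  by_cases ha : Odd a
  · by_cases hb : Odd b
    · simp only [Nat.odd_mul, ha, hb, and_self, if_true]
      rw [jacobiSym.mul_right' _ ha.pos.ne' hb.pos.ne']
      push_cast; rfl
    · simp [Nat.odd_mul, hb]
  · simp [Nat.odd_mul, ha]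

theorem oddJacobi_mod (n k : ℕ) : oddJacobi n (k % (4 * n)) = oddJacobi n k := by
  unfold oddJacobi
  have : Odd (k % (4 * n)) ↔ Odd k := by
    rw [Nat.odd_iff, Nat.odd_iff, Nat.mod_mod_of_dvd k ⟨2 * n, by ring⟩]
  by_cases hk : Odd k
  · rw [if_pos hk, if_pos (this.mpr hk), ← jacobiSym.mod_right' n hk]
  · rw [if_neg hk, if_neg (fun h => hk (this.mp h))]

/-- Multiplication by some `k₀` with `(n/k₀) = -1` permutes the residues modulo `4 n` and negates the
complete sum, which is therefore zero. -/
theorem abs_sum_oddJacobi_le {n : ℕ} (hsq : ¬ IsSquare n) (K : ℕ) :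
    |∑ k ∈ range K, oddJacobi n k| ≤ 4 * n := by
  have hn0 : n ≠ 0 := by rintro rfl; exact hsq ⟨0, rfl⟩
  have : NeZero (4 * n) := ⟨by omega⟩
  have hper : ∀ k, oddJacobi n (k + 4 * n) = oddJacobi n k := by
    intro k
    rw [← oddJacobi_mod n (k + 4 * n), Nat.add_mod_right, oddJacobi_mod]
  obtain ⟨k₀, hk₀, hJ⟩ := exists_odd_jacobiSym_eq_neg_one hsq
  have hval : oddJacobi n k₀ = -1 := by
    rw [oddJacobi, if_pos hk₀, hJ]; norm_num
  have hcop : Nat.Coprime k₀ (4 * n) := by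
    apply Nat.Coprime.mul_right
    · have : Nat.Coprime k₀ (2 ^ 2) := Nat.Coprime.pow_right 2 (Nat.coprime_two_right.mpr hk₀)
      exact this
    · by_contra h
      have : jacobiSym (n : ℤ) k₀ = 0 := by
        rw [jacobiSym.eq_zero_iff]
        exact ⟨hk₀.pos.ne', fun h' => h (Nat.Coprime.symm h')⟩
      omega
  have hZ : ∑ k ∈ range (4 * n), oddJacobi n k = ∑ x : ZMod (4 * n), oddJacobi n x.val := by
    symm
    refine sum_nbij' (fun k : ZMod (4 * n) => k.val) (fun v : ℕ => (v : ZMod (4 * n))) ?_ ?_ ?_ ?_ ?_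
    · intro k _; exact mem_range.mpr (ZMod.val_lt k)
    · intro v _; exact mem_univ _
    · intro k _; simp
    · intro v hv; exact ZMod.val_cast_of_lt (mem_range.mp hv)
    · intro k _; rfl
  have hneg : ∑ x : ZMod (4 * n), oddJacobi n x.val = - ∑ x : ZMod (4 * n), oddJacobi n x.val := by
    conv_lhs => rw [← Equiv.sum_comp (Units.mulLeft (ZMod.unitOfCoprime k₀ hcop))]
    rw [← sum_neg_distrib]
    refine sum_congr rfl fun x _ => ?_
    rw [Units.mulLeft_apply, ZMod.coe_unitOfCoprime, ZMod.val_mul, oddJacobi_mod, oddJacobi_mul,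
      ZMod.val_natCast, oddJacobi_mod, hval]
    ring
  have h := abs_sum_range_le_of_periodic (M := 4 * n) (by omega) hper (abs_oddJacobi_le_one n)
    (by rw [hZ]; linarith) K
  push_cast at h
  exact h

/-! ### The Selberg weights and the majorant of `1 / τ` -/

/-- The squarefree positive integers up to `D`. -/
def sqf (D : ℕ) : Finset ℕ := (Icc 1 D).filter Squarefree

/-- `J(f) = ∏_{p ∣ f} (2 p - 1)`, the product being over distinct primes; it satisfies
`∑_{f ∣ g} J(f) = τ(g) g` for squarefree `g`. -/
noncomputable def selbergJ (f : ℕ) : ℝ := ∏ p ∈ f.primeFactors, (2 * (p : ℝ) - 1)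

/-- The Selberg sum `V = ∑_{f ≤ D} μ²(f) / J(f)`. -/
noncomputable def selbergV (D : ℕ) : ℝ := ∑ f ∈ sqf D, 1 / selbergJ f

/-- The optimal Selberg weights `ρ_d = μ(d) (d / V) ∑_{f ≤ D, d ∣ f} 1 / J(f)`. -/
noncomputable def selbergRho (D d : ℕ) : ℝ :=
  (ArithmeticFunction.moebius d : ℝ) * d / selbergV D *
    ∑ f ∈ sqf D, if d ∣ f then 1 / selbergJ f else 0

/-- The majorant `Q(m) = ∑_{c ∣ m} (∑_{d ≤ D, c ∣ d ∣ m} ρ_d)²` of `1 / τ(m)`. -/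
noncomputable def selbergQ (D m : ℕ) : ℝ :=
  ∑ c ∈ m.divisors, (∑ d ∈ sqf D, if c ∣ d ∧ d ∣ m then selbergRho D d else 0) ^ 2

theorem mem_sqf {D f : ℕ} : f ∈ sqf D ↔ (1 ≤ f ∧ f ≤ D) ∧ Squarefree f := by
  simp [sqf]

theorem mem_sqf_of_dvd {D f g : ℕ} (hg : g ∈ sqf D) (h : f ∣ g) : f ∈ sqf D := by
  rw [mem_sqf] at *
  refine ⟨⟨Nat.pos_of_dvd_of_pos h hg.1.1, (Nat.le_of_dvd hg.1.1 h).trans hg.1.2⟩,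
    hg.2.squarefree_of_dvd h⟩

theorem selbergJ_pos (f : ℕ) : 0 < selbergJ f := by
  refine prod_pos fun p hp => ?_
  have : (2 : ℝ) ≤ p := by exact_mod_cast (Nat.prime_of_mem_primeFactors hp).two_le
  linarith

theorem sum_divisors_selbergJ {g : ℕ} (hg : Squarefree g) :
    ∑ f ∈ g.divisors, selbergJ f = (g.divisors.card : ℝ) * g := by
  have h := (ArithmeticFunction.IsMultiplicative.prodPrimeFactors
    (fun p : ℕ => 2 * (p : ℝ) - 1)).prodPrimeFactors_one_add_of_squarefree hg
  have h1 : ∑ f ∈ g.divisors, selbergJ f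
      = ∑ d ∈ g.divisors, ArithmeticFunction.prodPrimeFactors (fun p : ℕ => 2 * (p : ℝ) - 1) d := by
    refine sum_congr rfl fun f hf => ?_
    rw [ArithmeticFunction.prodPrimeFactors_apply (Nat.pos_of_mem_divisors hf).ne', selbergJ]
  rw [h1, ← h]
  have h2 : (g.divisors.card : ℝ) = ∏ p ∈ g.primeFactors, (2 : ℝ) := by
    rw [prod_const, ← ArithmeticFunction.sigma_zero_apply, ← Nat.cast_ofNat (n := 2),
      ← Nat.cast_pow]
    congr 1
    rw [ArithmeticFunction.sigma_zero_apply, Nat.card_divisors hg.ne_zero]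
    rw [← prod_const]
    refine prod_congr rfl fun p hp => ?_
    rw [Nat.factorization_eq_one_of_squarefree hg (Nat.prime_of_mem_primeFactors hp)
      (Nat.dvd_of_mem_primeFactors hp)]
  have h3 : (g : ℝ) = ∏ p ∈ g.primeFactors, (p : ℝ) := by
    conv_lhs => rw [← Nat.prod_primeFactors_of_squarefree hg]
    push_cast; rfl
  rw [h2]
  conv_rhs => rw [h3, ← prod_mul_distrib]
  refine prod_congr rfl fun p hp => ?_
  rw [ArithmeticFunction.prodPrimeFactors_apply (Nat.prime_of_mem_primeFactors hp).ne_zero,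
    (Nat.prime_of_mem_primeFactors hp).primeFactors]
  simp

theorem selbergJ_le {f : ℕ} (hf : Squarefree f) : selbergJ f ≤ (f.divisors.card : ℝ) * f := by
  rw [← sum_divisors_selbergJ hf]
  exact single_le_sum (f := selbergJ) (fun g _ => (selbergJ_pos g).le)
    (Nat.mem_divisors_self f hf.ne_zero)

theorem selbergV_pos {D : ℕ} (hD : 1 ≤ D) : 0 < selbergV D := by
  refine sum_pos (fun f _ => one_div_pos.mpr (selbergJ_pos f)) ⟨1, ?_⟩
  rw [mem_sqf]; exact ⟨⟨le_rfl, hD⟩, squarefree_one⟩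

theorem selbergRho_one {D : ℕ} (hD : 1 ≤ D) : selbergRho D 1 = 1 := by
  have := (selbergV_pos hD).ne'
  simp only [selbergRho, one_dvd, if_true, ArithmeticFunction.moebius_apply_one]
  rw [← selbergV]
  field_simp
  simp

theorem abs_selbergRho_le {D : ℕ} (hD : 1 ≤ D) (d : ℕ) : |selbergRho D d| ≤ d := by
  have hV := selbergV_pos hD
  rw [selbergRho, abs_mul, abs_div, abs_mul, abs_of_pos hV, Nat.abs_cast]
  have h1 : |(ArithmeticFunction.moebius d : ℝ)| ≤ 1 := by
    exact_mod_cast ArithmeticFunction.abs_moebius_le_one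
  have h2 : |∑ f ∈ sqf D, if d ∣ f then 1 / selbergJ f else 0| ≤ selbergV D := by
    rw [abs_of_nonneg (sum_nonneg fun f _ => by
      split_ifs
      · exact (one_div_pos.mpr (selbergJ_pos f)).le
      · exact le_rfl)]
    refine sum_le_sum fun f _ => ?_
    split_ifs
    · exact le_rfl
    · exact (one_div_pos.mpr (selbergJ_pos f)).le
  calc _ ≤ 1 * (d : ℝ) / selbergV D * selbergV D := by gcongr
    _ = d := by field_simp

theorem sum_divisors_moebius (n : ℕ) :
    ∑ c ∈ n.divisors, (ArithmeticFunction.moebius c : ℝ) = if n = 1 then 1 else 0 := by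
  have h := congrArg (fun F : ArithmeticFunction ℤ => F n) ArithmeticFunction.moebius_mul_coe_zeta
  simp only [ArithmeticFunction.coe_mul_zeta_apply, ArithmeticFunction.one_apply] at h
  exact_mod_cast h

/-- The relation dual to Möbius inversion over multiples, within the squarefree integers up to `D`. -/
theorem sum_moebius_between {D f g : ℕ} (hf : f ∈ sqf D) (hg : g ∈ sqf D) :
    ∑ d ∈ sqf D, (if f ∣ d ∧ d ∣ g then (ArithmeticFunction.moebius d : ℝ) else 0)
      = if f = g then (ArithmeticFunction.moebius f : ℝ) else 0 := by
  by_cases hfg : f ∣ g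
  · obtain ⟨h, rfl⟩ := hfg
    have hsq := (mem_sqf.mp hg).2
    have hf0 : 0 < f := (mem_sqf.mp hf).1.1
    have hh0 : h ≠ 0 := by rintro rfl; simp [mem_sqf] at hg
    have h1 : ∑ d ∈ sqf D, (if f ∣ d ∧ d ∣ f * h then (ArithmeticFunction.moebius d : ℝ) else 0)
        = ∑ c ∈ h.divisors, (ArithmeticFunction.moebius (f * c) : ℝ) := by
      rw [← sum_filter]
      symm
      refine sum_nbij (fun c => f * c) ?_ ?_ ?_ ?_
      · intro c hc
        rw [mem_filter]
        have : f * c ∣ f * h := mul_dvd_mul_left f (Nat.dvd_of_mem_divisors hc)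
        exact ⟨mem_sqf_of_dvd hg this, dvd_mul_right _ _, this⟩
      · intro a _ b _ hab
        exact Nat.eq_of_mul_eq_mul_left hf0 hab
      · rintro d hd
        rw [mem_coe, mem_filter] at hd
        obtain ⟨_, ⟨c, rfl⟩, hd3⟩ := hd
        refine ⟨c, ?_, rfl⟩
        rw [mem_coe, Nat.mem_divisors]
        exact ⟨Nat.dvd_of_mul_dvd_mul_left hf0 hd3, hh0⟩
      · intro _ _; rfl
    rw [h1]
    have h2 : ∀ c ∈ h.divisors, (ArithmeticFunction.moebius (f * c) : ℝ)
        = ArithmeticFunction.moebius f * (ArithmeticFunction.moebius c : ℝ) := by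
      intro c hc
      have hcop : Nat.Coprime f c :=
        (Nat.coprime_of_squarefree_mul hsq).coprime_dvd_right (Nat.dvd_of_mem_divisors hc)
      rw [ArithmeticFunction.isMultiplicative_moebius.map_mul_of_coprime hcop]
      push_cast; rfl
    rw [sum_congr rfl h2, ← mul_sum]
    have h3 : ∑ c ∈ h.divisors, (ArithmeticFunction.moebius c : ℝ) = if h = 1 then 1 else 0 := by
      exact sum_divisors_moebius h
    rw [h3]
    have : f = f * h ↔ h = 1 := by
      constructor
      · intro e; exact Nat.eq_of_mul_eq_mul_left hf0 (by rw [← e, mul_one])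
      · rintro rfl; simp
    simp only [this]
    split_ifs <;> simp
  · have : f ≠ g := by rintro rfl; exact hfg dvd_rfl
    rw [if_neg this]
    exact sum_eq_zero fun d _ => if_neg fun h => hfg (h.1.trans h.2)

/-- Möbius inversion diagonalises the Selberg weights. -/
theorem sum_selbergRho_div {D f : ℕ} (hf : f ∈ sqf D) :
    ∑ d ∈ sqf D, (if f ∣ d then selbergRho D d / d else 0)
      = (ArithmeticFunction.moebius f : ℝ) / (selbergJ f * selbergV D) := by
  have h1 : ∀ d ∈ sqf D, (if f ∣ d then selbergRho D d / d else 0)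
      = ∑ g ∈ sqf D, 1 / (selbergJ g * selbergV D) *
          (if f ∣ d ∧ d ∣ g then (ArithmeticFunction.moebius d : ℝ) else 0) := by
    intro d hd
    have hd0 : (d : ℝ) ≠ 0 := by
      have := (mem_sqf.mp hd).1.1
      exact_mod_cast (by omega : d ≠ 0)
    by_cases hfd : f ∣ d
    · simp only [hfd, if_true, true_and, selbergRho]
      rw [mul_sum, sum_div]
      refine sum_congr rfl fun g _ => ?_
      split_ifs
      · field_simp
      · simp
    · simp [hfd]
  rw [sum_congr rfl h1, sum_comm]
  have h2 : ∀ g ∈ sqf D, ∑ d ∈ sqf D, 1 / (selbergJ g * selbergV D) *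
          (if f ∣ d ∧ d ∣ g then (ArithmeticFunction.moebius d : ℝ) else 0)
      = if f = g then (ArithmeticFunction.moebius f : ℝ) / (selbergJ f * selbergV D) else 0 := by
    intro g hg
    rw [← mul_sum, sum_moebius_between hf hg]
    split_ifs with h
    · rw [h]; ring
    · simp
  rw [sum_congr rfl h2, sum_ite_eq, if_pos hf]

/-- The main-term quadratic form is diagonalised by `τ(g) g = ∑_{f ∣ g} J(f)` at `g = gcd(d, e)`, and
at the chosen weights it takes its minimal value `1 / V`. -/
theorem selberg_quadratic_form {D : ℕ} (hD : 1 ≤ D) :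
    ∑ d ∈ sqf D, ∑ e ∈ sqf D, selbergRho D d * selbergRho D e * ((d.gcd e).divisors.card : ℝ)
      * (1 / (d.lcm e : ℝ)) = 1 / selbergV D := by
  have h1 : ∀ d ∈ sqf D, ∀ e ∈ sqf D,
      selbergRho D d * selbergRho D e * ((d.gcd e).divisors.card : ℝ) * (1 / (d.lcm e : ℝ))
      = ∑ f ∈ sqf D, selbergJ f * ((if f ∣ d then selbergRho D d / d else 0)
          * (if f ∣ e then selbergRho D e / e else 0)) := by
    intro d hd e he
    have hd0 : 0 < d := (mem_sqf.mp hd).1.1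
    have he0 : 0 < e := (mem_sqf.mp he).1.1
    have hgsq : Squarefree (d.gcd e) := (mem_sqf.mp hd).2.squarefree_of_dvd (Nat.gcd_dvd_left d e)
    have hg0 : 0 < d.gcd e := Nat.gcd_pos_of_pos_left _ hd0
    have hl0 : 0 < d.lcm e := Nat.lcm_pos hd0 he0
    have hgl : (d.gcd e : ℝ) * d.lcm e = d * e := by exact_mod_cast Nat.gcd_mul_lcm d e
    have hs : ∑ f ∈ sqf D, selbergJ f * ((if f ∣ d then selbergRho D d / d else 0)
          * (if f ∣ e then selbergRho D e / e else 0))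
        = ∑ f ∈ (d.gcd e).divisors, selbergJ f * (selbergRho D d / d * (selbergRho D e / e)) := by
      have hsub : (d.gcd e).divisors ⊆ sqf D := fun f hf =>
        mem_sqf_of_dvd hd ((Nat.dvd_of_mem_divisors hf).trans (Nat.gcd_dvd_left d e))
      rw [← sum_subset hsub]
      · refine sum_congr rfl fun f hf => ?_
        have := Nat.dvd_of_mem_divisors hf
        rw [if_pos (this.trans (Nat.gcd_dvd_left d e)), if_pos (this.trans (Nat.gcd_dvd_right d e))]
      · intro f _ hf
        rw [Nat.mem_divisors, not_and_or] at hf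
        have : ¬ (f ∣ d ∧ f ∣ e) := by
          rintro ⟨h1, h2⟩
          rcases hf with h | h
          · exact h (Nat.dvd_gcd h1 h2)
          · exact h hg0.ne'
        by_cases h1 : f ∣ d
        · rw [if_neg (fun h2 => this ⟨h1, h2⟩)]; simp
        · rw [if_neg h1]; simp
    rw [hs, ← sum_mul, sum_divisors_selbergJ hgsq]
    have hd' : (d : ℝ) ≠ 0 := by exact_mod_cast hd0.ne'
    have he' : (e : ℝ) ≠ 0 := by exact_mod_cast he0.ne'
    have hl' : (d.lcm e : ℝ) ≠ 0 := by exact_mod_cast hl0.ne'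
    field_simp
    linear_combination (-1 : ℝ) * (selbergRho D d * selbergRho D e * ((d.gcd e).divisors.card : ℝ)) * hgl
  have h2 : ∑ d ∈ sqf D, ∑ e ∈ sqf D, selbergRho D d * selbergRho D e
      * ((d.gcd e).divisors.card : ℝ) * (1 / (d.lcm e : ℝ))
      = ∑ f ∈ sqf D, selbergJ f * (∑ d ∈ sqf D, if f ∣ d then selbergRho D d / d else 0) ^ 2 := by
    rw [sum_congr rfl fun d hd => sum_congr rfl fun e he => h1 d hd e he]
    rw [sum_congr rfl fun d _ => sum_comm, sum_comm]
    refine sum_congr rfl fun f _ => ?_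
    rw [sq, sum_mul_sum, mul_sum]
    exact sum_congr rfl fun d _ => by rw [mul_sum]
  rw [h2]
  have hV := (selbergV_pos hD).ne'
  have h3 : ∀ f ∈ sqf D,
      selbergJ f * (∑ d ∈ sqf D, if f ∣ d then selbergRho D d / d else 0) ^ 2
      = 1 / selbergJ f * (1 / selbergV D ^ 2) := by
    intro f hf
    have hJ := (selbergJ_pos f).ne'
    have hmu : (ArithmeticFunction.moebius f : ℝ) ^ 2 = 1 := by
      exact_mod_cast ArithmeticFunction.moebius_sq_eq_one_of_squarefree (mem_sqf.mp hf).2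
    rw [sum_selbergRho_div hf, div_pow, hmu]
    field_simp
  rw [sum_congr rfl h3, ← sum_mul, ← selbergV]
  field_simp

theorem selbergQ_nonneg (D m : ℕ) : 0 ≤ selbergQ D m := sum_nonneg fun _ _ => sq_nonneg _

/-- Cauchy–Schwarz against `μ(c)`, using `∑_{c ∣ d} μ(c) = 0` for `d > 1` and `ρ_1 = 1`. -/
theorem inv_card_divisors_le_selbergQ {D m : ℕ} (hD : 1 ≤ D) (hm : m ≠ 0) :
    1 / (m.divisors.card : ℝ) ≤ selbergQ D m := by
  have h1 : ∑ c ∈ m.divisors, (ArithmeticFunction.moebius c : ℝ)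
      * (∑ d ∈ sqf D, if c ∣ d ∧ d ∣ m then selbergRho D d else 0) = 1 := by
    simp only [mul_sum]
    rw [sum_comm]
    have h2 : ∀ d ∈ sqf D, ∑ c ∈ m.divisors, (ArithmeticFunction.moebius c : ℝ)
        * (if c ∣ d ∧ d ∣ m then selbergRho D d else 0) = if d = 1 then 1 else 0 := by
      intro d hd
      have hd0 : d ≠ 0 := by have := (mem_sqf.mp hd).1.1; omega
      by_cases hdm : d ∣ m
      · rw [← sum_subset (Nat.divisors_subset_of_dvd hm hdm)]
        · have : ∀ c ∈ d.divisors, (ArithmeticFunction.moebius c : ℝ)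
              * (if c ∣ d ∧ d ∣ m then selbergRho D d else 0)
              = (ArithmeticFunction.moebius c : ℝ) * selbergRho D d := fun c hc => by
            rw [if_pos ⟨Nat.dvd_of_mem_divisors hc, hdm⟩]
          rw [sum_congr rfl this, ← sum_mul, sum_divisors_moebius]
          split_ifs with h
          · rw [h, selbergRho_one hD, one_mul]
          · simp
        · intro c _ hc
          rw [if_neg, mul_zero]
          exact fun h => hc (Nat.mem_divisors.mpr ⟨h.1, hd0⟩)
      · have : d ≠ 1 := by rintro rfl; exact hdm (one_dvd _)
        simp [hdm, this]
    rw [sum_congr rfl h2, sum_ite_eq', if_pos]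
    rw [mem_sqf]; exact ⟨⟨le_rfl, hD⟩, squarefree_one⟩
  have hCS := sum_mul_sq_le_sq_mul_sq m.divisors (fun c => (ArithmeticFunction.moebius c : ℝ))
    (fun c => ∑ d ∈ sqf D, if c ∣ d ∧ d ∣ m then selbergRho D d else 0)
  rw [h1, ← selbergQ] at hCS
  have hcard : ∑ c ∈ m.divisors, (ArithmeticFunction.moebius c : ℝ) ^ 2 ≤ m.divisors.card := by
    calc _ ≤ ∑ c ∈ m.divisors, (1 : ℝ) := sum_le_sum fun c _ => by
            have : |(ArithmeticFunction.moebius c : ℝ)| ≤ 1 := by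
              exact_mod_cast ArithmeticFunction.abs_moebius_le_one
            exact (sq_le_one_iff_abs_le_one _).mpr this
      _ = _ := by simp
  have hpos : (0 : ℝ) < m.divisors.card := by
    exact_mod_cast card_pos.mpr ⟨1, Nat.one_mem_divisors.mpr hm⟩
  rw [div_le_iff₀ hpos]
  have := mul_le_mul_of_nonneg_right hcard (selbergQ_nonneg D m)
  linarith

theorem selbergQ_eq {D m : ℕ} (hm : m ≠ 0) :
    selbergQ D m = ∑ d ∈ sqf D, ∑ e ∈ sqf D,
      selbergRho D d * selbergRho D e * ((d.gcd e).divisors.card : ℝ)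
        * (if d.lcm e ∣ m then 1 else 0) := by
  unfold selbergQ
  have h1 : ∀ c ∈ m.divisors, (∑ d ∈ sqf D, if c ∣ d ∧ d ∣ m then selbergRho D d else 0) ^ 2
      = ∑ d ∈ sqf D, ∑ e ∈ sqf D, (if c ∣ d ∧ d ∣ m then selbergRho D d else 0)
        * (if c ∣ e ∧ e ∣ m then selbergRho D e else 0) := fun c _ => by
    rw [sq, sum_mul_sum]
  rw [sum_congr rfl h1, sum_comm]
  refine sum_congr rfl fun d hd => ?_
  rw [sum_comm]
  refine sum_congr rfl fun e he => ?_
  have hd0 : 0 < d := (mem_sqf.mp hd).1.1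
  have hg0 : 0 < d.gcd e := Nat.gcd_pos_of_pos_left _ hd0
  by_cases h : d.lcm e ∣ m
  · have hdm : d ∣ m := (Nat.dvd_lcm_left d e).trans h
    have hem : e ∣ m := (Nat.dvd_lcm_right d e).trans h
    rw [if_pos h, mul_one, ← sum_subset (Nat.divisors_subset_of_dvd hm
      ((Nat.gcd_dvd_left d e).trans hdm))]
    · have : ∀ c ∈ (d.gcd e).divisors, (if c ∣ d ∧ d ∣ m then selbergRho D d else 0)
        * (if c ∣ e ∧ e ∣ m then selbergRho D e else 0) = selbergRho D d * selbergRho D e := by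
        intro c hc
        have hc := Nat.dvd_of_mem_divisors hc
        rw [if_pos ⟨hc.trans (Nat.gcd_dvd_left d e), hdm⟩,
          if_pos ⟨hc.trans (Nat.gcd_dvd_right d e), hem⟩]
      rw [sum_congr rfl this, sum_const, nsmul_eq_mul]
      ring
    · intro c _ hc
      by_cases h1 : c ∣ d
      · have : ¬ c ∣ e := fun h2 => hc (Nat.mem_divisors.mpr ⟨Nat.dvd_gcd h1 h2, hg0.ne'⟩)
        simp [this]
      · simp [h1]
  · rw [if_neg h, mul_zero]
    refine sum_eq_zero fun c _ => ?_
    by_cases h1 : d ∣ m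
    · have : ¬ e ∣ m := fun h2 => h (Nat.lcm_dvd h1 h2)
      simp [this]
    · simp [h1]

theorem sum_selbergQ_mul (D Y : ℕ) (w : ℕ → ℝ) :
    ∑ m ∈ Icc 1 Y, selbergQ D m * w m = ∑ d ∈ sqf D, ∑ e ∈ sqf D,
      selbergRho D d * selbergRho D e * ((d.gcd e).divisors.card : ℝ)
        * ∑ m ∈ (Icc 1 Y).filter (d.lcm e ∣ ·), w m := by
  have h1 : ∀ m ∈ Icc 1 Y, selbergQ D m * w m = ∑ d ∈ sqf D, ∑ e ∈ sqf D,
      selbergRho D d * selbergRho D e * ((d.gcd e).divisors.card : ℝ)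
        * (if d.lcm e ∣ m then w m else 0) := by
    intro m hm
    have hm0 : m ≠ 0 := by have := (mem_Icc.mp hm).1; omega
    rw [selbergQ_eq hm0, sum_mul]
    refine sum_congr rfl fun d _ => ?_
    rw [sum_mul]
    refine sum_congr rfl fun e _ => ?_
    split_ifs <;> simp
  rw [sum_congr rfl h1, sum_comm]
  refine sum_congr rfl fun d _ => ?_
  rw [sum_comm]
  refine sum_congr rfl fun e _ => ?_
  rw [sum_filter, mul_sum]

theorem sum_abs_selberg_le {D : ℕ} (hD : 1 ≤ D) :
    ∑ d ∈ sqf D, ∑ e ∈ sqf D,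
      |selbergRho D d * selbergRho D e * ((d.gcd e).divisors.card : ℝ)| ≤ (D : ℝ) ^ 5 := by
  have hcard : ((sqf D).card : ℝ) ≤ D := by
    have : (sqf D).card ≤ (Icc 1 D).card := card_filter_le _ _
    rw [Nat.card_Icc] at this
    exact_mod_cast this
  have hrho : ∀ d ∈ sqf D, |selbergRho D d| ≤ D := fun d hd =>
    (abs_selbergRho_le hD d).trans (by exact_mod_cast (mem_sqf.mp hd).1.2)
  have h1 : ∀ d ∈ sqf D, ∀ e ∈ sqf D,
      |selbergRho D d * selbergRho D e * ((d.gcd e).divisors.card : ℝ)| ≤ (D : ℝ) ^ 3 := by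
    intro d hd e he
    have hd' := mem_sqf.mp hd
    have : ((d.gcd e).divisors.card : ℝ) ≤ D := by
      have h1 := Nat.card_divisors_le_self (d.gcd e)
      have h2 := Nat.le_of_dvd hd'.1.1 (Nat.gcd_dvd_left d e)
      have h3 := hd'.1.2
      exact_mod_cast h1.trans (h2.trans h3)
    rw [abs_mul, abs_mul, Nat.abs_cast]
    calc _ ≤ (D : ℝ) * D * D := by
          gcongr
          · exact hrho d hd
          · exact hrho e he
      _ = _ := by ring
  calc _ ≤ ∑ d ∈ sqf D, ∑ e ∈ sqf D, (D : ℝ) ^ 3 :=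
        sum_le_sum fun d hd => sum_le_sum fun e he => h1 d hd e he
    _ = (sqf D).card * ((sqf D).card * (D : ℝ) ^ 3) := by simp
    _ ≤ D * (D * (D : ℝ) ^ 3) := by gcongr
    _ = _ := by ring

theorem sum_selbergQ_le {D : ℕ} (hD : 1 ≤ D) (Y : ℕ) :
    ∑ m ∈ Icc 1 Y, selbergQ D m ≤ Y / selbergV D + (D : ℝ) ^ 5 := by
  have h := sum_selbergQ_mul D Y (fun _ => 1)
  simp only [mul_one] at h
  rw [h]
  have h1 : ∀ d ∈ sqf D, ∀ e ∈ sqf D,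
      selbergRho D d * selbergRho D e * ((d.gcd e).divisors.card : ℝ)
        * ∑ m ∈ (Icc 1 Y).filter (d.lcm e ∣ ·), (1 : ℝ)
      ≤ Y * (selbergRho D d * selbergRho D e * ((d.gcd e).divisors.card : ℝ) * (1 / (d.lcm e : ℝ)))
        + |selbergRho D d * selbergRho D e * ((d.gcd e).divisors.card : ℝ)| := by
    intro d hd e he
    set a := selbergRho D d * selbergRho D e * ((d.gcd e).divisors.card : ℝ)
    set q := d.lcm e
    have hq0 : 0 < q := Nat.lcm_pos (mem_sqf.mp hd).1.1 (mem_sqf.mp he).1.1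
    have hq' : (0 : ℝ) < q := by exact_mod_cast hq0
    have hcount : ∑ m ∈ (Icc 1 Y).filter (q ∣ ·), (1 : ℝ) = ((Y / q : ℕ) : ℝ) := by
      rw [sum_const, nsmul_eq_mul, mul_one]
      congr 1
      exact Nat.Ioc_filter_dvd_card_eq_div Y q
    rw [hcount]
    have hle : ((Y / q : ℕ) : ℝ) ≤ (Y : ℝ) / q := Nat.cast_div_le
    have hge : (Y : ℝ) / q - 1 ≤ ((Y / q : ℕ) : ℝ) := by
      rw [sub_le_iff_le_add, div_le_iff₀ hq']
      have h2 : Y ≤ (Y / q + 1) * q := by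
        have := Nat.div_add_mod Y q
        have := Nat.mod_lt Y hq0
        nlinarith
      exact_mod_cast h2
    have habs : |((Y / q : ℕ) : ℝ) - (Y : ℝ) / q| ≤ 1 := by
      rw [abs_le]; constructor <;> linarith
    have : a * (((Y / q : ℕ) : ℝ) - (Y : ℝ) / q) ≤ |a| := by
      refine (le_abs_self _).trans ?_
      rw [abs_mul]
      exact mul_le_of_le_one_right (abs_nonneg _) habs
    have e1 : (Y : ℝ) * (a * (1 / (q : ℝ))) = a * ((Y : ℝ) / q) := by ring
    rw [e1]; linarith
  refine (sum_le_sum fun d hd => sum_le_sum fun e he => h1 d hd e he).trans ?_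
  simp only [sum_add_distrib, ← mul_sum]
  rw [selberg_quadratic_form hD]
  have := sum_abs_selberg_le hD
  have e1 : (Y : ℝ) * (1 / selbergV D) = Y / selbergV D := by ring
  linarith

/-- On the multiples `m = q k` of `q = lcm(d, e)` the symbol factors as `(n/q) (n/k)`, so each inner
sum is bounded by the period `4 n`. -/
theorem sum_selbergQ_oddJacobi_le {D : ℕ} (hD : 1 ≤ D) (Y : ℕ) {n : ℕ} (hn : ¬ IsSquare n) :
    ∑ m ∈ Icc 1 Y, selbergQ D m * oddJacobi n m ≤ (D : ℝ) ^ 5 * (4 * n) := by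
  rw [sum_selbergQ_mul]
  have h1 : ∀ d ∈ sqf D, ∀ e ∈ sqf D,
      selbergRho D d * selbergRho D e * ((d.gcd e).divisors.card : ℝ)
        * ∑ m ∈ (Icc 1 Y).filter (d.lcm e ∣ ·), oddJacobi n m
      ≤ |selbergRho D d * selbergRho D e * ((d.gcd e).divisors.card : ℝ)| * (4 * n) := by
    intro d hd e he
    have hq0 : 0 < d.lcm e := Nat.lcm_pos (mem_sqf.mp hd).1.1 (mem_sqf.mp he).1.1
    have hz : ∑ m ∈ (Icc 1 Y).filter (d.lcm e ∣ ·), oddJacobi n m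
        = ∑ m ∈ (range (Y + 1)).filter (d.lcm e ∣ ·), oddJacobi n m := by
      refine sum_subset ?_ ?_
      · intro m hm
        simp only [mem_filter, mem_Icc, mem_range] at hm ⊢
        exact ⟨by omega, hm.2⟩
      · intro m hm hm'
        simp only [mem_filter, mem_Icc, mem_range, not_and] at hm hm'
        have : m = 0 := by
          by_contra h0
          exact hm' ⟨by omega, by omega⟩ hm.2
        subst this
        simp [oddJacobi]
    rw [hz, sum_range_filter_dvd _ hq0]
    simp only [oddJacobi_mul]
    rw [← mul_sum]
    refine (le_abs_self _).trans ?_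
    rw [abs_mul]
    refine mul_le_mul_of_nonneg_left ?_ (abs_nonneg _)
    rw [abs_mul]
    exact (mul_le_of_le_one_left (abs_nonneg _) (abs_oddJacobi_le_one _ _)).trans
      (abs_sum_oddJacobi_le hn _)
  refine (sum_le_sum fun d hd => sum_le_sum fun e he => h1 d hd e he).trans ?_
  simp only [← sum_mul]
  exact mul_le_mul_of_nonneg_right (sum_abs_selberg_le hD) (by positivity)

/-! ### Lower bound for the Selberg sum -/

theorem sum_one_div_sq_le (N : ℕ) : ∑ l ∈ Icc 1 N, 1 / (l : ℝ) ^ 2 ≤ 2 := by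
  have h : ∀ N : ℕ, ∑ l ∈ Icc 1 (N + 1), 1 / (l : ℝ) ^ 2 ≤ 2 - 1 / ((N : ℝ) + 1) := by
    intro N
    induction N with
    | zero => norm_num
    | succ k ih =>
      rw [sum_Icc_succ_top (by omega)]
      have h0 : (0 : ℝ) ≤ k := k.cast_nonneg
      have : 1 / ((k + 1 + 1 : ℕ) : ℝ) ^ 2 ≤ 1 / ((k : ℝ) + 1) - 1 / (((k + 1 : ℕ) : ℝ) + 1) := by
        push_cast
        rw [div_sub_div _ _ (by positivity) (by positivity),
          div_le_div_iff₀ (by positivity) (by positivity)]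
        nlinarith
      linarith
  rcases N with _ | N
  · simp
  · have h1 : (0 : ℝ) ≤ 1 / ((N : ℝ) + 1) := by positivity
    linarith [h N]

theorem sum_one_div_isSquare_le (N : ℕ) :
    ∑ n ∈ (Icc 1 N).filter (fun n => IsSquare n), 1 / (n : ℝ) ≤ 2 := by
  refine le_trans ?_ (sum_one_div_sq_le N)
  have hsub : (Icc 1 N).filter (fun n => IsSquare n) ⊆ (Icc 1 N).image (fun l => l ^ 2) := by
    intro n hn
    simp only [mem_filter, mem_Icc, mem_image] at hn ⊢
    obtain ⟨⟨h1, h2⟩, r, rfl⟩ := hn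
    have hr : 1 ≤ r := Nat.pos_of_mul_pos_left h1
    exact ⟨r, ⟨hr, (Nat.le_mul_self r).trans h2⟩, by ring⟩
  calc ∑ n ∈ (Icc 1 N).filter (fun n => IsSquare n), 1 / (n : ℝ)
      ≤ ∑ n ∈ (Icc 1 N).image (fun l : ℕ => l ^ 2), 1 / (n : ℝ) :=
        sum_le_sum_of_subset_of_nonneg hsub fun _ _ _ => by positivity
    _ = ∑ l ∈ Icc 1 N, 1 / (l : ℝ) ^ 2 := by
        rw [sum_image fun a _ b _ h => Nat.pow_left_injective (n := 2) (by norm_num) h]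
        push_cast
        rfl

/-- Writing `k = b² a` with `a` squarefree bounds the harmonic sum by twice its squarefree part. -/
theorem log_le_two_mul_sum_sqf (D : ℕ) :
    Real.log (D + 1) ≤ 2 * ∑ n ∈ sqf D, 1 / (n : ℝ) := by
  have h1 : Real.log ((D : ℝ) + 1) ≤ ∑ k ∈ Icc 1 D, 1 / (k : ℝ) := by
    have := log_add_one_le_harmonic D
    rw [harmonic_eq_sum_Icc] at this
    push_cast at this
    simpa using this
  have h2 : ∑ k ∈ Icc 1 D, 1 / (k : ℝ)
      ≤ ∑ x ∈ sqf D ×ˢ Icc 1 D, 1 / (x.1 : ℝ) * (1 / (x.2 : ℝ) ^ 2) := by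
    refine le_trans (sum_le_sum fun k hk => ?_)
      (sum_fiberwise_le_sum_of_sum_fiber_nonneg (s := sqf D ×ˢ Icc 1 D) (t := Icc 1 D)
        (g := fun x => x.2 ^ 2 * x.1) fun _ _ => sum_nonneg fun _ _ => by positivity)
    rw [mem_Icc] at hk
    obtain ⟨a, b, ha, hb, hab, hsq⟩ := Nat.sq_mul_squarefree_of_pos hk.1
    have hak : a ≤ k := hab ▸ Nat.le_mul_of_pos_left a (by positivity)
    have hbk : b ≤ k := by
      rw [← hab, sq, mul_assoc]
      exact Nat.le_mul_of_pos_right b (by positivity)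
    have hmem : (a, b) ∈ (sqf D ×ˢ Icc 1 D).filter (fun x => x.2 ^ 2 * x.1 = k) := by
      simp only [mem_filter, mem_product, mem_sqf, mem_Icc]
      exact ⟨⟨⟨⟨ha, hak.trans hk.2⟩, hsq⟩, hb, hbk.trans hk.2⟩, hab⟩
    have := single_le_sum (f := fun x : ℕ × ℕ => 1 / (x.1 : ℝ) * (1 / (x.2 : ℝ) ^ 2))
      (fun _ _ => by positivity) hmem
    refine le_trans (le_of_eq ?_) this
    have hk' : (k : ℝ) = (b : ℝ) ^ 2 * a := by exact_mod_cast hab.symm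
    simp only
    rw [hk', one_div_mul_one_div, mul_comm]
  rw [sum_product] at h2
  simp only [← sum_mul_sum] at h2
  have h3 : (0 : ℝ) ≤ ∑ n ∈ sqf D, 1 / (n : ℝ) := sum_nonneg fun _ _ => by positivity
  nlinarith [sum_one_div_sq_le D]

/-- A squarefree `n` has `τ(n)` factorisations `n = f g`, each with `τ(f) τ(g) = τ(n)`, so the
square of `∑ μ²(f) / (τ(f) f)` dominates `∑ μ²(n) / n`. -/
theorem sum_sqf_le_sq_selbergV (D : ℕ) : ∑ n ∈ sqf D, 1 / (n : ℝ) ≤ selbergV D ^ 2 := by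
  have h1 : ∑ f ∈ sqf D, 1 / ((f.divisors.card : ℝ) * f) ≤ selbergV D :=
    sum_le_sum fun f hf => one_div_le_one_div_of_le (selbergJ_pos f) (selbergJ_le (mem_sqf.mp hf).2)
  have h0 : (0 : ℝ) ≤ ∑ f ∈ sqf D, 1 / ((f.divisors.card : ℝ) * f) :=
    sum_nonneg fun _ _ => by positivity
  refine le_trans ?_ (pow_le_pow_left₀ h0 h1 2)
  rw [sq, sum_mul_sum, ← sum_product']
  refine le_trans (sum_le_sum fun n hn => ?_)
    (sum_fiberwise_le_sum_of_sum_fiber_nonneg (s := sqf D ×ˢ sqf D) (t := sqf D)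
      (g := fun x => x.1 * x.2) fun _ _ => sum_nonneg fun _ _ => by positivity)
  have hsq := (mem_sqf.mp hn).2
  have hsub : n.divisorsAntidiagonal ⊆ (sqf D ×ˢ sqf D).filter (fun x => x.1 * x.2 = n) := by
    rintro ⟨f, g⟩ hx
    rw [Nat.mem_divisorsAntidiagonal] at hx
    simp only [mem_filter, mem_product]
    exact ⟨⟨mem_sqf_of_dvd hn ⟨g, hx.1.symm⟩, mem_sqf_of_dvd hn ⟨f, by rw [mul_comm, hx.1]⟩⟩, hx.1⟩
  refine le_trans (le_of_eq ?_)
    (sum_le_sum_of_subset_of_nonneg hsub fun _ _ _ => by positivity)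
  have hterm : ∀ x ∈ n.divisorsAntidiagonal,
      1 / ((x.1.divisors.card : ℝ) * x.1) * (1 / ((x.2.divisors.card : ℝ) * x.2))
        = 1 / ((n.divisors.card : ℝ) * n) := by
    rintro ⟨f, g⟩ hx
    obtain ⟨rfl, -⟩ := Nat.mem_divisorsAntidiagonal.mp hx
    simp only
    rw [(Nat.coprime_of_squarefree_mul hsq).card_divisors_mul, one_div_mul_one_div]
    push_cast
    ring
  rw [sum_congr rfl hterm, sum_const, nsmul_eq_mul, ← Nat.map_div_right_divisors, card_map]
  have hn0 : n ≠ 0 := hsq.ne_zero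
  have hc : (n.divisors.card : ℝ) ≠ 0 := by
    exact_mod_cast (card_pos.mpr (Nat.nonempty_divisors.mpr hn0)).ne'
  field_simp

theorem log_le_sq_selbergV (D : ℕ) : Real.log (D + 1) ≤ 2 * selbergV D ^ 2 := by
  linarith [log_le_two_mul_sum_sqf D, sum_sqf_le_sq_selbergV D]

/-! ### The sifted sum -/

theorem sum_selbergQ_mul_partialL_le {D : ℕ} (hD : 1 ≤ D) (N Y : ℕ) :
    ∑ m ∈ Icc 1 Y, ∑ n ∈ Icc 1 N, 1 / (n : ℝ) * (selbergQ D m * oddJacobi n m)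
      ≤ 2 * (Y / selbergV D + (D : ℝ) ^ 5) + 4 * N * (D : ℝ) ^ 5 := by
  set S : ℝ := Y / selbergV D + (D : ℝ) ^ 5 with hS
  have hS0 : 0 ≤ S := by
    have := selbergV_pos hD
    positivity
  rw [sum_comm]
  have hn : ∀ n ∈ Icc 1 N, ∑ m ∈ Icc 1 Y, 1 / (n : ℝ) * (selbergQ D m * oddJacobi n m)
      ≤ (if IsSquare n then 1 / (n : ℝ) * S else 0) + 4 * (D : ℝ) ^ 5 := by
    intro n hn
    have hn0 : (0 : ℝ) < n := by exact_mod_cast (mem_Icc.mp hn).1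
    rw [← mul_sum]
    split_ifs with hsq
    · have : ∑ m ∈ Icc 1 Y, selbergQ D m * oddJacobi n m ≤ S :=
        (sum_le_sum fun m _ => mul_le_of_le_one_right (selbergQ_nonneg D m)
          (le_of_abs_le (abs_oddJacobi_le_one n m))).trans (sum_selbergQ_le hD Y)
      have h2 : 1 / (n : ℝ) * ∑ m ∈ Icc 1 Y, selbergQ D m * oddJacobi n m ≤ 1 / (n : ℝ) * S := by
        gcongr
      have : (0 : ℝ) ≤ 4 * (D : ℝ) ^ 5 := by positivity
      linarith
    · calc 1 / (n : ℝ) * ∑ m ∈ Icc 1 Y, selbergQ D m * oddJacobi n m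
          ≤ 1 / (n : ℝ) * ((D : ℝ) ^ 5 * (4 * n)) := by
            gcongr
            exact sum_selbergQ_oddJacobi_le hD Y hsq
        _ = 0 + 4 * (D : ℝ) ^ 5 := by field_simp; ring
  refine (sum_le_sum hn).trans ?_
  rw [sum_add_distrib, ← sum_filter, ← sum_mul, sum_const, Nat.card_Icc, nsmul_eq_mul]
  have := mul_le_mul_of_nonneg_right (sum_one_div_isSquare_le N) hS0
  simp only [Nat.add_sub_cancel]
  linarith

/-- The inequality for arbitrary parameters: `D` is the level of the majorant, `N` the length of the
truncation and `E` a bound for its error. -/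
theorem sum_le_of_params {D : ℕ} (hD : 1 ≤ D) (N Y : ℕ) {E : ℝ}
    (hE : 2 * (√Y * (1 + Real.log Y)) / (N + 1) ≤ E) {L : ℕ → ℝ}
    (hL : ∀ m : ℕ, 1 < m → Odd m → Squarefree m →
      Filter.Tendsto (fun N : ℕ => ∑ n ∈ Finset.Icc 1 N, (jacobiSym (n : ℤ) m : ℝ) / n)
        Filter.atTop (nhds (L m))) :
    ∑ m ∈ Icc 2 Y,
        ((ArithmeticFunction.moebius (2 * m) : ℝ) ^ 2 / ((Nat.divisors m).card : ℝ)) * L m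
      ≤ (2 + E) * (Y / selbergV D + (D : ℝ) ^ 5) + 4 * N * (D : ℝ) ^ 5 := by
  have hE0 : 0 ≤ E := le_trans (by positivity) hE
  -- Pólya–Vinogradov, uniformly over the nonsquare odd moduli up to `Y`.
  have hPV : ∀ m ∈ Icc 1 Y, Odd m → ¬ IsSquare m → ∀ x,
      |∑ n ∈ range x, (jacobiSym (n : ℤ) m : ℝ)| ≤ √Y * (1 + Real.log Y) := by
    intro m hm hodd hsq x
    rw [mem_Icc] at hm
    have hm0 : (0 : ℝ) < m := by exact_mod_cast hm.1
    have hmY : (m : ℝ) ≤ Y := by exact_mod_cast hm.2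
    refine (polya_vinogradov hodd hsq x).trans ?_
    gcongr
  have hpos : ∀ m ∈ Icc 1 Y, Odd m → 0 ≤ partialL N m + E := by
    intro m hm hodd
    by_cases hsq : IsSquare m
    · linarith [partialL_nonneg_of_isSquare (by rw [mem_Icc] at hm; omega) hsq N]
    · have hm1 : 1 < m := by
        rcases Nat.lt_or_ge 1 m with h | h
        · exact h
        · obtain rfl : m = 1 := le_antisymm h (mem_Icc.mp hm).1
          exact absurd ⟨1, rfl⟩ hsq
      linarith [partialL_ge hm1 (hPV m hm hodd hsq) N]
  have hsubset : Icc 2 Y ⊆ Icc 1 Y := Icc_subset_Icc_left (by norm_num)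
  -- The nonnegative majorant of the summand, defined for every `m`.
  set F : ℕ → ℝ := fun m => if Odd m then selbergQ D m * (partialL N m + E) else 0 with hF
  have hF0 : ∀ m ∈ Icc 1 Y, 0 ≤ F m := by
    intro m hm
    simp only [hF]
    split_ifs with h
    · exact mul_nonneg (selbergQ_nonneg D m) (hpos m hm h)
    · exact le_rfl
  have hterm : ∀ m ∈ Icc 2 Y,
      ((ArithmeticFunction.moebius (2 * m) : ℝ) ^ 2 / ((Nat.divisors m).card : ℝ)) * L m ≤ F m := by
    intro m hm
    have hm2 : 2 ≤ m := (mem_Icc.mp hm).1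
    by_cases h2 : Squarefree (2 * m)
    · have hcop := Nat.coprime_of_squarefree_mul h2
      have hodd : Odd m := Nat.coprime_two_left.mp hcop
      have hsf : Squarefree m := h2.squarefree_of_dvd (Dvd.intro_left 2 rfl)
      have hsq : ¬ IsSquare m := by
        rintro ⟨r, rfl⟩
        have hr := Nat.isUnit_iff.mp (hsf r dvd_rfl)
        subst hr
        omega
      have hLle : L m ≤ partialL N m + E := by
        have := le_partialL_add_of_tendsto (hPV m (hsubset hm) hodd hsq) (hL m hm2 hodd hsf) N
        linarith
      have hmu : (ArithmeticFunction.moebius (2 * m) : ℝ) ^ 2 = 1 := by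
        exact_mod_cast ArithmeticFunction.moebius_sq_eq_one_of_squarefree h2
      simp only [hF, hodd, if_true, hmu]
      calc 1 / ((Nat.divisors m).card : ℝ) * L m
          ≤ 1 / ((Nat.divisors m).card : ℝ) * (partialL N m + E) := by gcongr
        _ ≤ selbergQ D m * (partialL N m + E) :=
          mul_le_mul_of_nonneg_right (inv_card_divisors_le_selbergQ hD (by omega))
            (hpos m (hsubset hm) hodd)
    · rw [ArithmeticFunction.moebius_eq_zero_of_not_squarefree h2]
      simpa using hF0 m (hsubset hm)
  have hFle : ∀ m ∈ Icc 1 Y, F m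
      ≤ ∑ n ∈ Icc 1 N, 1 / (n : ℝ) * (selbergQ D m * oddJacobi n m) + E * selbergQ D m := by
    intro m _
    simp only [hF, oddJacobi]
    split_ifs with h
    · rw [partialL, mul_add, mul_sum]
      refine le_of_eq ?_
      congr 1
      · exact sum_congr rfl fun n _ => by ring
      · ring
    · simpa using mul_nonneg hE0 (selbergQ_nonneg D m)
  calc _ ≤ ∑ m ∈ Icc 2 Y, F m := sum_le_sum hterm
    _ ≤ ∑ m ∈ Icc 1 Y, F m := sum_le_sum_of_subset_of_nonneg hsubset fun m hm _ => hF0 m hm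
    _ ≤ _ := sum_le_sum hFle
    _ ≤ _ := by
      rw [sum_add_distrib, ← mul_sum]
      have h1 := sum_selbergQ_mul_partialL_le hD N Y
      have h2 := mul_le_mul_of_nonneg_left (sum_selbergQ_le hD Y) hE0
      linarith

theorem statement2 :
    ∃ C : ℝ, ∀ X : ℝ, 3 ≤ X → ∀ L : ℕ → ℝ,
      (∀ m : ℕ, 1 < m → Odd m → Squarefree m →
        Filter.Tendsto (fun N : ℕ => ∑ n ∈ Finset.Icc 1 N, (jacobiSym (n : ℤ) m : ℝ) / n)
          Filter.atTop (nhds (L m))) →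
      ∑ m ∈ Finset.Icc 2 ⌊X⌋₊,
          ((ArithmeticFunction.moebius (2 * m) : ℝ) ^ 2 / ((Nat.divisors m).card : ℝ)) * L m
        ≤ C * X / Real.sqrt (Real.log X) := by
  refine ⟨200, fun X hX L hL => ?_⟩
  have hX0 : 0 < X := by linarith
  have hlog : 0 < Real.log X := Real.log_pos (by linarith)
  set l : ℝ := √(Real.log X) with hl
  have hl0 : 0 < l := Real.sqrt_pos.mpr hlog
  have hl2 : l ^ 2 = Real.log X := Real.sq_sqrt hlog.le
  -- All powers of `X` are expressed through `u = X ^ (1 / 40)`.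
  set u : ℝ := X ^ (1 / 40 : ℝ) with hu
  have hu1 : 1 ≤ u := Real.one_le_rpow (by linarith) (by norm_num)
  have huX : u ^ 40 = X := by
    rw [hu, ← Real.rpow_natCast, ← Real.rpow_mul hX0.le]
    norm_num
  have hlogu : Real.log X = 40 * Real.log u := by
    rw [← huX, Real.log_pow]; norm_num
  have hlog4 : Real.log X ≤ 4 * u ^ 10 := by
    have h : Real.log (u ^ 10) ≤ u ^ 10 - 1 := Real.log_le_sub_one_of_pos (by positivity)
    rw [Real.log_pow] at h
    push_cast at h
    linarith
  have hl5 : l ≤ 2 * u ^ 5 := by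
    refine abs_le_of_sq_le_sq' ?_ (by positivity) |>.2
    nlinarith
  set D : ℕ := ⌊u⌋₊ with hDdef
  have hD : 1 ≤ D := Nat.le_floor (by exact_mod_cast hu1)
  have hDu : (D : ℝ) ≤ u := Nat.floor_le (by linarith)
  have hDu' : u ≤ D + 1 := (Nat.lt_floor_add_one u).le
  set N : ℕ := ⌈u ^ 30⌉₊ with hNdef
  have hN1 : u ^ 30 ≤ N := Nat.le_ceil _
  have hN2 : (N : ℝ) ≤ 2 * u ^ 30 := by
    have : (N : ℝ) < u ^ 30 + 1 := Nat.ceil_lt_add_one (by positivity)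
    have : 1 ≤ u ^ 30 := one_le_pow₀ hu1
    linarith
  set Y : ℕ := ⌊X⌋₊ with hYdef
  have hYX : (Y : ℝ) ≤ X := Nat.floor_le hX0.le
  have hY0 : (0 : ℝ) < Y := by
    have : 1 ≤ Y := Nat.le_floor (by push_cast; linarith)
    exact_mod_cast this
  have hE : 2 * (√Y * (1 + Real.log Y)) / (N + 1) ≤ 10 := by
    have h1 : √(Y : ℝ) ≤ u ^ 20 := Real.sqrt_le_iff.mpr ⟨by positivity, by
      rw [← pow_mul, huX]; exact hYX⟩
    have h2 : 1 + Real.log Y ≤ 5 * u ^ 10 := by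
      have := Real.log_le_log hY0 hYX
      have : 1 ≤ u ^ 10 := one_le_pow₀ hu1
      linarith
    have h3 : √(Y : ℝ) * (1 + Real.log Y) ≤ u ^ 20 * (5 * u ^ 10) := by
      have : 0 ≤ 1 + Real.log (Y : ℝ) := by positivity
      gcongr
    rw [div_le_iff₀ (by positivity)]
    have h4 : u ^ 20 * (5 * u ^ 10) = 5 * u ^ 30 := by ring
    linarith
  refine (sum_le_of_params hD N Y hE hL).trans ?_
  have hV := selbergV_pos hD
  have hVl : l ≤ 9 * selbergV D := by
    have h1 := log_le_sq_selbergV D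
    have h2 : Real.log u ≤ Real.log (D + 1) := Real.log_le_log (by linarith) hDu'
    refine abs_le_of_sq_le_sq' ?_ (by positivity) |>.2
    nlinarith
  have hD5 : (D : ℝ) ^ 5 ≤ u ^ 5 := by gcongr
  have hmain : Y / selbergV D ≤ 9 * (X / l) := by
    rw [← mul_div_assoc, div_le_div_iff₀ hV hl0]
    nlinarith
  have hsmall : u ^ 35 ≤ 2 * (X / l) := by
    rw [← mul_div_assoc, le_div_iff₀ hl0, ← huX]
    calc u ^ 35 * l ≤ u ^ 35 * (2 * u ^ 5) := by gcongr
      _ = 2 * u ^ 40 := by ring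
  have hu5 : u ^ 5 ≤ u ^ 35 := pow_le_pow_right₀ hu1 (by norm_num)
  have hND : (N : ℝ) * (D : ℝ) ^ 5 ≤ 2 * u ^ 35 := by
    calc (N : ℝ) * (D : ℝ) ^ 5 ≤ 2 * u ^ 30 * u ^ 5 := by gcongr
      _ = 2 * u ^ 35 := by ring
  have hXl : 0 ≤ X / l := by positivity
  rw [mul_div_assoc]
  linarith
end

section
/- Let z > 0 and let P(z) be the product of all odd primes ≤ z. Let (λ⁺_d) be any real sequence satisfying ∑_{d | n} λ⁺_d ≥ 1 if n = 1 and ∑_{d | n} λ⁺_d ≥ 0 for all n > 1. Let f : ℕ → [0,1] be a multiplicative function with f(p^m) ≤ f(p) for all primes p and all m ≥ 1, and define the multiplicative function f̂ by f̂(n) = ∏_{p | n} (1 − f(p)). Then for every positive integer n one has f(n) ≤ ∑_{d | n, d | P(z)} λ⁺_d f̂(d). -/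
/-!
Let `S` be the set of primes dividing `gcd(n, P)`. Since `P` is squarefree, the divisors `d` of `n`
with `d ∣ P` are exactly the products of the subsets of `S` (`sum_divisors_prod_primes`), so the
right-hand side is `∑_{T ⊆ S} λ(∏ T) ∏_{p ∈ T} (1 - f p)`. Expanding `1 = f p + (1 - f p)` over the
primes in `S \ T` turns it into a combination, over `W ⊆ S`, of the sieve sums
`∑_{T ⊆ W} λ(∏ T)` with the nonnegative weights `∏_{p ∈ W} (1 - f p) ∏_{p ∈ S \ W} f p`.
The sieve hypothesis makes all terms nonnegative, and the term `W = ∅` is at least `∏_{p ∈ S} f p`.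
This is `prod_le_sum_powerset`, proved one prime at a time. Finally
`f n = ∏_{p ∣ n} f (p ^ v_p(n)) ≤ ∏_{p ∣ n} f p ≤ ∏_{p ∈ S} f p`.
-/

open Finset

/-- A sieve-type inequality on subsets. The constant `c` is arbitrary because the induction uses
both the given `c` and `c = 0`. -/
lemma prod_le_sum_powerset (f : ℕ → ℝ) (hf : ∀ n, 0 ≤ f n ∧ f n ≤ 1) (S : Finset ℕ) :
    ∀ (c : ℝ) (L : Finset ℕ → ℝ),
      (∀ W ⊆ S, (if W = ∅ then c else 0) ≤ ∑ T ∈ W.powerset, L T) →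
      c * ∏ p ∈ S, f p ≤ ∑ T ∈ S.powerset, L T * ∏ p ∈ T, (1 - f p) := by
  induction S using Finset.induction_on with
  | empty => intro c L h; simpa using h ∅ subset_rfl
  | insert a S ha ih =>
    intro c L h
    have h1 := ih c L fun W hW => h W (hW.trans (subset_insert a S))
    have h2 := ih 0 (fun T => L T + L (insert a T)) fun W hW => by
      have h3 := h (insert a W) (insert_subset_insert a hW)
      rw [sum_powerset_insert (fun hh => ha (hW hh)), ← sum_add_distrib] at h3
      simpa using h3
    -- split off the prime `a`: weight `f a` on `L`, weight `1 - f a` on `L T + L (insert a T)`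
    have key : ∑ T ∈ (insert a S).powerset, L T * ∏ p ∈ T, (1 - f p)
        = f a * ∑ T ∈ S.powerset, L T * ∏ p ∈ T, (1 - f p)
          + (1 - f a) * ∑ T ∈ S.powerset, (L T + L (insert a T)) * ∏ p ∈ T, (1 - f p) := by
      rw [sum_powerset_insert ha, mul_sum, mul_sum, ← sum_add_distrib, ← sum_add_distrib]
      refine sum_congr rfl fun T hT => ?_
      rw [prod_insert fun hh => ha (mem_powerset.1 hT hh)]
      ring
    rw [key, prod_insert ha]
    rw [zero_mul] at h2
    have h4 := mul_le_mul_of_nonneg_left h1 (hf a).1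
    have h5 := mul_nonneg (sub_nonneg.2 (hf a).2) h2
    linarith

lemma squarefree_prod_primes (S : Finset ℕ) (hS : ∀ p ∈ S, p.Prime) :
    Squarefree (∏ p ∈ S, p) := by
  refine Finset.squarefree_prod_of_pairwise_isCoprime (fun p hp q hq hpq => ?_)
    fun p hp => (hS p hp).squarefree
  exact Nat.coprime_iff_isRelPrime.1 ((Nat.coprime_primes (hS p hp) (hS q hq)).2 hpq)

lemma sum_divisors_prod_primes (S : Finset ℕ) (hS : ∀ p ∈ S, p.Prime) (g : ℕ → ℝ) :
    ∑ d ∈ (∏ p ∈ S, p).divisors, g d = ∑ T ∈ S.powerset, g (∏ p ∈ T, p) := by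
  have hsq := squarefree_prod_primes S hS
  have hd : ∀ d ∈ (∏ p ∈ S, p).divisors, ∏ p ∈ d.primeFactors, p = d := fun d hd =>
    Nat.prod_primeFactors_of_squarefree (hsq.squarefree_of_dvd (Nat.dvd_of_mem_divisors hd))
  refine sum_nbij' (fun d => d.primeFactors) (fun T => ∏ p ∈ T, p) ?_ ?_ hd ?_ ?_
  · intro d hd
    rw [mem_powerset]
    conv_rhs => rw [← Nat.primeFactors_prod hS]
    exact Nat.primeFactors_mono (Nat.dvd_of_mem_divisors hd) hsq.ne_zero
  · intro T hT
    exact Nat.mem_divisors.2 ⟨prod_dvd_prod_of_subset _ _ _ (mem_powerset.1 hT), hsq.ne_zero⟩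
  · intro T hT
    exact Nat.primeFactors_prod fun p hp => hS p (mem_powerset.1 hT hp)
  · intro d hd'
    simp only [hd d hd']

theorem statement4 (z : ℝ) (hz : 0 < z)
    (P : ℕ) (hP : P = ∏ p ∈ (Finset.Icc 1 ⌊z⌋₊).filter (fun p : ℕ => p.Prime ∧ Odd p), p)
    (lam : ℕ → ℝ)
    (hlam : ∀ n : ℕ, 0 < n → (if n = 1 then (1 : ℝ) else 0) ≤ ∑ d ∈ Nat.divisors n, lam d)
    (f : ℕ → ℝ)
    (hf01 : ∀ n, 0 ≤ f n ∧ f n ≤ 1)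
    (hf1 : f 1 = 1)
    (hfmult : ∀ m n : ℕ, Nat.Coprime m n → f (m * n) = f m * f n)
    (hfp : ∀ p m : ℕ, p.Prime → 1 ≤ m → f (p ^ m) ≤ f p)
    (fhat : ℕ → ℝ) (hfhat : ∀ n : ℕ, fhat n = ∏ p ∈ n.primeFactors, (1 - f p)) :
    ∀ n : ℕ, 0 < n →
      f n ≤ ∑ d ∈ n.divisors.filter (· ∣ P), lam d * fhat d := by
  intro n hn
  have hPsq : Squarefree P := by
    rw [hP]
    exact squarefree_prod_primes _ fun p hp => (mem_filter.1 hp).2.1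
  set S := (n.gcd P).primeFactors with hSdef
  have hS : ∀ p ∈ S, p.Prime := fun p hp => Nat.prime_of_mem_primeFactors hp
  have hprod : ∏ p ∈ S, p = n.gcd P :=
    Nat.prod_primeFactors_of_squarefree (hPsq.squarefree_of_dvd (Nat.gcd_dvd_right n P))
  have hdiv : n.divisors.filter (· ∣ P) = (∏ p ∈ S, p).divisors := by
    ext d
    rw [hprod]
    simp [Nat.dvd_gcd_iff, hn.ne']
  have hSn : S ⊆ n.primeFactors := Nat.primeFactors_mono (Nat.gcd_dvd_left n P) hn.ne'
  have hfn : f n ≤ ∏ p ∈ S, f p := by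
    rw [Nat.multiplicative_factorization f hfmult hf1 hn.ne', Finsupp.prod,
      Nat.support_factorization]
    calc ∏ p ∈ n.primeFactors, f (p ^ n.factorization p)
        ≤ ∏ p ∈ n.primeFactors, f p := by
          refine prod_le_prod (fun p _ => (hf01 _).1) fun p hp => ?_
          have hp' := Nat.prime_of_mem_primeFactors hp
          exact hfp p _ hp'
            (hp'.factorization_pos_of_dvd hn.ne' (Nat.dvd_of_mem_primeFactors hp))
      _ = (∏ p ∈ n.primeFactors \ S, f p) * ∏ p ∈ S, f p := (prod_sdiff hSn).symm
      _ ≤ ∏ p ∈ S, f p := mul_le_of_le_one_left (prod_nonneg fun p _ => (hf01 p).1)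
          (prod_le_one (fun p _ => (hf01 p).1) fun p _ => (hf01 p).2)
  have hmain := prod_le_sum_powerset f hf01 S 1 (fun T => lam (∏ p ∈ T, p)) fun W hW => by
    have hW' : ∀ p ∈ W, p.Prime := fun p hp => hS p (hW hp)
    have h := hlam (∏ p ∈ W, p) (prod_pos fun p hp => (hW' p hp).pos)
    rw [sum_divisors_prod_primes W hW'] at h
    have hiff : ∏ p ∈ W, p = 1 ↔ W = ∅ := by
      constructor
      · intro h1
        rw [← Nat.primeFactors_prod hW', h1, Nat.primeFactors_one]
      · rintro rfl
        rfl
    simpa only [hiff] using h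
  rw [one_mul] at hmain
  rw [hdiv, sum_divisors_prod_primes S hS]
  refine hfn.trans (hmain.trans (le_of_eq (sum_congr rfl fun T hT => ?_)))
  rw [hfhat, Nat.primeFactors_prod fun p hp => hS p (mem_powerset.1 hT hp)]
end
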